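/- arXiv:1101.1372 — 10 statements merged into one kernel-verified Lean document; each statement's English description precedes it below -/
import Mathlib

section
/- The projective symplectic group PSp(4, F_3), i.e., the quotient of the symplectic group Sp(4, F_3) over the field with three elements by its center, contains a subgroup isomorphic to (Z/2Z)^4. -/
open Matrix in
/-- The `2 × 2` matrices `1, i, j, i * j` of a quaternion group in `SL(2, F_3)`. -/
def pspQ (a b : ZMod 2) : Matrix (Fin 2) (Fin 2) (ZMod 3) :=
  (if a = 0 then 1 else !![0, -1; 1, 0]) * (if b = 0 then 1 else !![1, 1; 1, -1])

open Matrix in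
/-- The `2 × 2` matrices `1, d, s, d * s` of a dihedral group in `O(2, F_3)`. -/
def pspD (a b : ZMod 2) : Matrix (Fin 2) (Fin 2) (ZMod 3) :=
  (if a = 0 then 1 else !![1, 0; 0, -1]) * (if b = 0 then 1 else !![0, 1; 1, 0])

/-- The Kronecker product of two `2 × 2` matrices, as a block matrix. -/
def pspB (X Y : Matrix (Fin 2) (Fin 2) (ZMod 3)) :
    Matrix (Fin 2 ⊕ Fin 2) (Fin 2 ⊕ Fin 2) (ZMod 3) :=
  Matrix.fromBlocks (X 0 0 • Y) (X 0 1 • Y) (X 1 0 • Y) (X 1 1 • Y)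

theorem pspB_mul (X Y X' Y' : Matrix (Fin 2) (Fin 2) (ZMod 3)) :
    pspB X Y * pspB X' Y' = pspB (X * X') (Y * Y') := by
  simp [pspB, Matrix.fromBlocks_multiply, Matrix.mul_apply, Fin.sum_univ_two, add_smul,
    smul_smul, mul_comm]

theorem pspB_neg_left (X Y : Matrix (Fin 2) (Fin 2) (ZMod 3)) :
    pspB (-X) Y = -pspB X Y := by
  simp [pspB, Matrix.fromBlocks_neg]

theorem pspB_neg_right (X Y : Matrix (Fin 2) (Fin 2) (ZMod 3)) :
    pspB X (-Y) = -pspB X Y := by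
  simp [pspB, Matrix.fromBlocks_neg]

theorem pspQ_mul : ∀ a b c d, pspQ a b * pspQ c d = pspQ (a + c) (b + d) ∨
    pspQ a b * pspQ c d = -pspQ (a + c) (b + d) := by
  decide +kernel

theorem pspD_mul : ∀ a b c d, pspD a b * pspD c d = pspD (a + c) (b + d) ∨
    pspD a b * pspD c d = -pspD (a + c) (b + d) := by
  decide +kernel

/-- The Kronecker product of `pspQ` and `pspD`. -/
def pspM (x : ZMod 2 × ZMod 2 × ZMod 2 × ZMod 2) :
    Matrix (Fin 2 ⊕ Fin 2) (Fin 2 ⊕ Fin 2) (ZMod 3) :=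
  pspB (pspQ x.1 x.2.1) (pspD x.2.2.1 x.2.2.2)

theorem pspM_mem : ∀ x, pspM x ∈ Matrix.symplecticGroup (Fin 2) (ZMod 3) := by
  simp only [SymplecticGroup.mem_iff]
  decide +kernel

theorem pspM_mul (x y : ZMod 2 × ZMod 2 × ZMod 2 × ZMod 2) :
    pspM x * pspM y = pspM (x + y) ∨ pspM x * pspM y = -pspM (x + y) := by
  simp only [pspM, pspB_mul, Prod.fst_add, Prod.snd_add]
  rcases pspQ_mul x.1 x.2.1 y.1 y.2.1 with h | h <;>
  rcases pspD_mul x.2.2.1 x.2.2.2 y.2.2.1 y.2.2.2 with h' | h' <;>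
  simp [h, h', pspB_neg_left, pspB_neg_right]

theorem pspM_inj : ∀ x, (∀ y, pspM y * pspM x = pspM x * pspM y) → x = 0 := by
  decide +kernel

/-- The symplectic matrix attached to a vector. -/
def pspG (x : ZMod 2 × ZMod 2 × ZMod 2 × ZMod 2) : Matrix.symplecticGroup (Fin 2) (ZMod 3) :=
  ⟨pspM x, pspM_mem x⟩

/-- The matrix `-1` in the symplectic group. -/
def pspNeg : Matrix.symplecticGroup (Fin 2) (ZMod 3) :=
  ⟨-1, SymplecticGroup.neg_mem (one_mem _)⟩

theorem psp_neg_mem_center :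
    pspNeg ∈
      Subgroup.center (Matrix.symplecticGroup (Fin 2) (ZMod 3)) := by
  rw [Subgroup.mem_center_iff]
  intro g
  apply Subtype.ext
  simp [pspNeg]

/-- The homomorphism from the elementary abelian group to `PSp(4, F_3)`. -/
def pspHom : Multiplicative (ZMod 2 × ZMod 2 × ZMod 2 × ZMod 2) →*
    (Matrix.symplecticGroup (Fin 2) (ZMod 3) ⧸
        Subgroup.center (Matrix.symplecticGroup (Fin 2) (ZMod 3))) :=
  MonoidHom.mk' (fun x => QuotientGroup.mk (pspG x.toAdd)) (by
    intro x y
    rw [← QuotientGroup.mk_mul, QuotientGroup.eq, toAdd_mul]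
    rcases pspM_mul x.toAdd y.toAdd with h | h
    · have : pspG x.toAdd * pspG y.toAdd = pspG (x.toAdd + y.toAdd) := Subtype.ext h
      rw [this, inv_mul_cancel]
      exact one_mem _
    · have : pspG x.toAdd * pspG y.toAdd = pspG (x.toAdd + y.toAdd) * pspNeg := by
        apply Subtype.ext
        simpa [pspG, pspNeg] using h
      rw [this, inv_mul_cancel_left]
      exact psp_neg_mem_center)

theorem pspHom_injective : Function.Injective pspHom := by
  rw [injective_iff_map_eq_one]
  intro x hx
  have h : pspG x.toAdd ∈ Subgroup.center (Matrix.symplecticGroup (Fin 2) (ZMod 3)) :=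
    (QuotientGroup.eq_one_iff _).1 hx
  rw [Subgroup.mem_center_iff] at h
  have h0 := pspM_inj x.toAdd fun y => congrArg Subtype.val (h (pspG y))
  exact toAdd_eq_zero.1 h0

/-- PSp(4, F_3), the quotient of Sp(4, F_3) by its center, contains a subgroup
isomorphic to (ℤ/2ℤ)⁴. -/
theorem psp4_f3_contains_Z2_pow4 :
    ∃ H : Subgroup (Matrix.symplecticGroup (Fin 2) (ZMod 3) ⧸
        Subgroup.center (Matrix.symplecticGroup (Fin 2) (ZMod 3))),
      Nonempty (H ≃* Multiplicative (ZMod 2 × ZMod 2 × ZMod 2 × ZMod 2)) := by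
  exact ⟨pspHom.range, ⟨(MonoidHom.ofInjective pspHom_injective).symm⟩⟩
end

section
/- Every abelian subgroup of PSL(2, F_11) is either cyclic or isomorphic to the Klein four group (Z/2Z)^2. -/
abbrev SLEleven : Type := Matrix.SpecialLinearGroup (Fin 2) (ZMod 11)

instance factPrimeEleven : Fact (Nat.Prime 11) := ⟨by norm_num⟩

theorem sl_one_ne_neg_one : (1 : SLEleven) ≠ -1 := by decide

theorem sl_det (A : SLEleven) : A 0 0 * A 1 1 - A 0 1 * A 1 0 = 1 := by
  have := A.2
  rwa [Matrix.det_fin_two] at this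

theorem sl_ext {A B : SLEleven} (h00 : A 0 0 = B 0 0) (h01 : A 0 1 = B 0 1)
    (h10 : A 1 0 = B 1 0) (h11 : A 1 1 = B 1 1) : A = B := by
  ext i j
  fin_cases i <;> fin_cases j <;> assumption

theorem sl_mul (A B : SLEleven) (i j : Fin 2) :
    (A * B) i j = A i 0 * B 0 j + A i 1 * B 1 j := by
  rw [Matrix.SpecialLinearGroup.coe_mul, Matrix.mul_apply, Fin.sum_univ_two]

theorem sl_neg (A : SLEleven) (i j : Fin 2) : (-A) i j = - A i j := by
  rw [Matrix.SpecialLinearGroup.coe_neg, Matrix.neg_apply]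

theorem zmod_two_ne : (2 : ZMod 11) ≠ 0 := by decide

/-- A scalar matrix of determinant one is plus or minus the identity. -/
theorem sl_scalar {A : SLEleven} (h01 : A 0 1 = 0) (h10 : A 1 0 = 0)
    (h : A 0 0 = A 1 1) : A = 1 ∨ A = -1 := by
  have hd := sl_det A
  have h2 : (A 1 1 - 1) * (A 1 1 + 1) = 0 := by
    rw [h01, h] at hd
    linear_combination hd
  rcases mul_eq_zero.mp h2 with h3 | h3
  · left
    have h4 := sub_eq_zero.mp h3
    apply sl_ext <;> simp [*]
  · right
    have h4 := eq_neg_of_add_eq_zero_left h3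
    apply sl_ext <;> simp [*]

theorem sl_mem_center {A : SLEleven} : A ∈ Subgroup.center SLEleven ↔ A = 1 ∨ A = -1 := by
  constructor
  · intro h
    have h1 := Matrix.SpecialLinearGroup.scalar_eq_self_of_mem_center h 0
    apply sl_scalar
    · rw [← h1]; simp
    · rw [← h1]; simp
    · have := congrFun (congrFun h1 1) 1
      rw [← this]; simp
  · rintro (rfl | rfl)
    · exact one_mem _
    · rw [Subgroup.mem_center_iff]
      intro g
      simp

theorem sl_sq_of_anticomm {A B : SLEleven} (h : A * B = -(B * A)) : A * A = -1 := by
  have h1 : A * B * B⁻¹ = -(B * A) * B⁻¹ := by rw [h]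
  have htr : A 0 0 + A 1 1 = 0 := by
    have h2 : (A : Matrix (Fin 2) (Fin 2) (ZMod 11)).trace
        = - (A : Matrix (Fin 2) (Fin 2) (ZMod 11)).trace := by
      have h3 : A = -(B * A * B⁻¹) := by
        rw [mul_inv_cancel_right] at h1
        rw [neg_mul] at h1
        exact h1
      conv_lhs => rw [h3]
      rw [Matrix.SpecialLinearGroup.coe_neg, Matrix.trace_neg, Matrix.SpecialLinearGroup.coe_mul,
        Matrix.trace_mul_comm, ← Matrix.SpecialLinearGroup.coe_mul, inv_mul_cancel_left]
    rw [Matrix.trace_fin_two] at h2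
    have : (2 : ZMod 11) * (A 0 0 + A 1 1) = 0 := by linear_combination h2
    exact (mul_eq_zero.mp this).resolve_left zmod_two_ne
  have hd := sl_det A
  apply sl_ext <;> rw [sl_mul, sl_neg] <;> simp
  · linear_combination A 0 0 * htr - hd
  · linear_combination A 0 1 * htr
  · linear_combination A 1 0 * htr
  · linear_combination A 1 1 * htr - hd

theorem sl_of_sq_one {A : SLEleven} (h : A * A = 1) : A = 1 ∨ A = -1 := by
  have e (i j : Fin 2) : (A * A) i j = (1 : SLEleven) i j := by rw [h]
  have e00 := e 0 0
  have e01 := e 0 1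
  have e10 := e 1 0
  have e11 := e 1 1
  rw [sl_mul] at e00 e01 e10 e11
  simp at e00 e01 e10 e11
  have hd := sl_det A
  have ht : A 0 0 + A 1 1 ≠ 0 := by
    intro h0
    apply zmod_two_ne
    linear_combination (A 0 0) * h0 - e00 - hd
  apply sl_scalar
  · exact (mul_eq_zero.mp (show A 0 1 * (A 0 0 + A 1 1) = 0 by linear_combination e01)).resolve_right ht
  · exact (mul_eq_zero.mp (show A 1 0 * (A 0 0 + A 1 1) = 0 by linear_combination e10)).resolve_right ht
  · exact sub_eq_zero.mp ((mul_eq_zero.mp (show (A 0 0 - A 1 1) * (A 0 0 + A 1 1) = 0 by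
      linear_combination e00 - e11)).resolve_right ht)

theorem sl_comm_iff {A B : SLEleven} : A * B = B * A ↔
    A 0 1 * B 1 0 = B 0 1 * A 1 0 ∧
    A 0 1 * (B 0 0 - B 1 1) = B 0 1 * (A 0 0 - A 1 1) ∧
    A 1 0 * (B 0 0 - B 1 1) = B 1 0 * (A 0 0 - A 1 1) := by
  constructor
  · intro h
    have e (i j : Fin 2) : (A * B) i j = (B * A) i j := by rw [h]
    have e00 := e 0 0
    have e01 := e 0 1
    have e10 := e 1 0
    simp only [sl_mul] at e00 e01 e10
    refine ⟨?_, ?_, ?_⟩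
    · linear_combination e00
    · linear_combination -e01
    · linear_combination e10
  · rintro ⟨h1, h2, h3⟩
    apply sl_ext <;> simp only [sl_mul]
    · linear_combination h1
    · linear_combination -h2
    · linear_combination h3
    · linear_combination -h1

theorem sl_central {A B C : SLEleven} (hA : C * A = A * C) (hB : C * B = B * C)
    (hAB : A * B ≠ B * A) : C = 1 ∨ C = -1 := by
  rw [sl_comm_iff] at hA hB
  rw [ne_eq, sl_comm_iff] at hAB
  obtain ⟨a1, a2, a3⟩ := hA
  obtain ⟨b1, b2, b3⟩ := hB
  generalize A 0 0 - A 1 1 = dA at *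
  generalize B 0 0 - B 1 1 = dB at *
  have h01 : C 0 1 = 0 := by
    by_contra hne
    apply hAB
    refine ⟨?_, ?_, ?_⟩ <;> apply mul_left_cancel₀ hne
    · linear_combination A 0 1 * b1 - B 0 1 * a1
    · linear_combination A 0 1 * b2 - B 0 1 * a2
    · apply mul_left_cancel₀ hne
      grind
  have h10 : C 1 0 = 0 := by
    by_contra hne
    apply hAB
    refine ⟨?_, ?_, ?_⟩ <;> apply mul_left_cancel₀ hne <;> grind
  have h11 : C 0 0 - C 1 1 = 0 := by
    by_contra hne
    apply hAB
    refine ⟨?_, ?_, ?_⟩ <;> apply mul_left_cancel₀ hne <;> grind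
  exact sl_scalar h01 h10 (sub_eq_zero.mp h11)

theorem sl_card : Nat.card SLEleven = 1320 := by
  have hGL : Nat.card (Matrix.GeneralLinearGroup (Fin 2) (ZMod 11)) = 13200 := by
    rw [Matrix.card_GL_field]
    simp [Fin.prod_univ_two]
  let f : Matrix.GeneralLinearGroup (Fin 2) (ZMod 11) →* (ZMod 11)ˣ :=
    Matrix.GeneralLinearGroup.det
  have hf : Function.Surjective f := Matrix.GeneralLinearGroup.det_surjective
  have h1 := Subgroup.card_mul_index f.ker
  rw [Subgroup.index_ker, MonoidHom.range_eq_top.mpr hf, Subgroup.card_top, hGL,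
    Nat.card_eq_fintype_card (α := (ZMod 11)ˣ), ZMod.card_units] at h1
  have h2 : Nat.card SLEleven = Nat.card f.ker := by
    have hr : f.ker = (Matrix.SpecialLinearGroup.toGL :
        SLEleven →* Matrix.GeneralLinearGroup (Fin 2) (ZMod 11)).range := by
      apply SetLike.coe_injective
      rw [MonoidHom.coe_range, Matrix.SpecialLinearGroup.range_toGL]
      rfl
    rw [hr]
    exact Nat.card_congr
      (MonoidHom.ofInjective Matrix.SpecialLinearGroup.toGL_injective).toEquiv
  omega

theorem psl_card : Nat.card (SLEleven ⧸ Subgroup.center SLEleven) ∣ 660 := by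
  have h1 := Subgroup.card_eq_card_quotient_mul_card_subgroup (Subgroup.center SLEleven)
  rw [sl_card] at h1
  have h2 : 2 ∣ Nat.card (Subgroup.center SLEleven) := by
    let z : Subgroup.center SLEleven := ⟨-1, sl_mem_center.mpr (Or.inr rfl)⟩
    have hz : orderOf z = 2 := by
      apply orderOf_eq_prime
      · ext1; simp [z]
      · intro h
        exact sl_one_ne_neg_one (congrArg Subtype.val h).symm
    exact hz.symm.dvd.trans (orderOf_dvd_natCard z)
  obtain ⟨k, hk⟩ := h2
  rw [hk] at h1
  exact ⟨k, by nlinarith⟩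

theorem cyclic_of_unique_involution {G : Type*} [Group G] [Finite G]
    (hc : ∀ x y : G, x * y = y * x) (hd : Nat.card G ∣ 660)
    (hu : ∀ x y : G, x * x = 1 → y * y = 1 → x ≠ 1 → y ≠ 1 → x = y) : IsCyclic G := by
  let : CommGroup G := { (inferInstance : Group G) with mul_comm := hc }
  have hz : IsZGroup G := by
    refine ⟨fun p hp P => ?_⟩
    have := Fact.mk hp
    obtain ⟨k, hk⟩ := IsPGroup.iff_card.mp P.2
    change Nat.card P = p ^ k at hk
    have hdvd : p ^ k ∣ 660 := hk ▸ (Subgroup.card_subgroup_dvd_card _).trans hd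
    rcases Nat.lt_or_ge k 2 with hk2 | hk2
    · apply isCyclic_of_card_dvd_prime (p := p)
      rw [hk]
      exact (pow_dvd_pow p (by omega : k ≤ 1)).trans (by simp)
    · have hp2 : p ^ 2 ∣ 660 := (pow_dvd_pow p hk2).trans hdvd
      have hle : p < 26 := by
        have := Nat.le_of_dvd (by norm_num) hp2
        nlinarith
      have hp_two : p = 2 := by
        interval_cases p <;> first | rfl | (exfalso; revert hp2; norm_num; done) | (exfalso; revert hp; norm_num; done)
      subst hp_two
      have hk3 : k = 2 := by
        by_contra hne
        have : 2 ^ 3 ∣ 660 := (pow_dvd_pow 2 (by omega)).trans hdvd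
        norm_num at this
      subst hk3
      by_contra hcyc
      have hexp := (not_isCyclic_iff_exponent_eq_prime Nat.prime_two hk).mp hcyc
      have hsq (x : (P : Subgroup G)) : (x : G) * x = 1 := by
        have := Monoid.pow_exponent_eq_one x
        rw [hexp, pow_two] at this
        exact congrArg Subtype.val this
      have hle2 : Nat.card P ≤ 2 := by
        by_cases hn : ∃ t : P, t ≠ 1
        · obtain ⟨t, ht⟩ := hn
          have hcov : (Set.univ : Set P) ⊆ {1, t} := by
            intro x _
            by_cases hx : x = 1
            · left; exact hx
            · right
              apply Subtype.ext
              exact hu _ _ (hsq x) (hsq t) (by simpa using hx) (by simpa using ht)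
          rw [← Set.ncard_univ]
          exact (Set.ncard_le_ncard hcov (Set.toFinite _)).trans 
            ((Set.ncard_insert_le _ _).trans (by rw [Set.ncard_singleton]))
        · push Not at hn
          have : Subsingleton P := ⟨fun x y => by rw [hn x, hn y]⟩
          exact (Finite.card_le_one_iff_subsingleton.mpr this).trans (by norm_num)
      omega
  infer_instance

theorem psl_mk_eq_one {A : SLEleven} :
    (QuotientGroup.mk A : SLEleven ⧸ Subgroup.center SLEleven) = 1 ↔ A = 1 ∨ A = -1 := by
  rw [QuotientGroup.eq_one_iff, sl_mem_center]

theorem psl_mk_eq {A B : SLEleven} (h :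
    (QuotientGroup.mk A : SLEleven ⧸ Subgroup.center SLEleven) = QuotientGroup.mk B) :
    A = B ∨ A = -B := by
  rw [QuotientGroup.eq, sl_mem_center] at h
  rcases h with h | h
  · left; exact inv_mul_eq_one.mp h
  · right
    rw [inv_mul_eq_iff_eq_mul] at h
    rw [h]; simp

theorem psl_mk_neg (A : SLEleven) :
    (QuotientGroup.mk (-A) : SLEleven ⧸ Subgroup.center SLEleven) = QuotientGroup.mk A := by
  rw [QuotientGroup.eq, sl_mem_center]
  right
  rw [inv_mul_eq_iff_eq_mul]; simp

theorem sl_not_both {A B : SLEleven} (h : A * B = -(B * A)) : A * B ≠ B * A := by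
  intro h2
  rw [h2] at h
  apply sl_one_ne_neg_one
  have : B * A * (B * A)⁻¹ = -(B * A) * (B * A)⁻¹ := by rw [← h]
  simpa using this

theorem klein_list {G : Type*} [Group G] {a b : G} (haa : a * a = 1) (hbb : b * b = 1)
    (hab : a * b = b * a) (ha : a ≠ 1) (hb : b ≠ 1) (hne : a ≠ b)
    (hall : ∀ x : G, x = 1 ∨ x = a ∨ x = b ∨ x = a * b) : IsKleinFour G := by
  have hsq : ∀ x : G, x * x = 1 := by
    intro x
    rcases hall x with rfl | rfl | rfl | rfl
    · simp
    · exact haa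
    · exact hbb
    · calc a * b * (a * b) = a * (b * a) * b := by group
        _ = (a * a) * (b * b) := by rw [← hab]; group
        _ = 1 := by rw [haa, hbb, one_mul]
  have : Nontrivial G := ⟨a, 1, ha⟩
  have h3 : a * b ≠ 1 := by
    intro h
    apply hne
    rw [mul_eq_one_iff_eq_inv] at h
    rw [h]
    exact inv_eq_of_mul_eq_one_left hbb
  refine ⟨?_, ?_⟩
  · have huniv : (Set.univ : Set G) = {1, a, b, a * b} := by
      ext x
      simpa using hall x
    rw [← Set.ncard_univ, huniv]
    classical
    have : ({1, a, b, a * b} : Set G) = (({1, a, b, a * b} : Finset G) : Set G) := by simp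
    rw [this, Set.ncard_coe_finset]
    rw [Finset.card_insert_of_notMem, Finset.card_insert_of_notMem, Finset.card_pair]
    · simpa using ha
    · simp [hne, hb]
    · simp [ha.symm, hb.symm, h3.symm]
  · rw [Monoid.exponent_eq_prime_iff Nat.prime_two]
    intro g hg
    exact orderOf_eq_prime (by rw [pow_two, hsq]) hg

theorem sl_anti_mul {A B C : SLEleven} (h1 : C * A = -(A * C)) (h2 : B * A = -(A * B)) :
    (C * B) * A = A * (C * B) := by
  rw [mul_assoc, h2, mul_neg, ← mul_assoc, h1, neg_mul, neg_neg, mul_assoc]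

theorem sl_anti_mul_comm {A B C : SLEleven} (h1 : C * A = -(A * C)) (h2 : B * A = A * B) :
    (C * B) * A = -(A * (C * B)) := by
  rw [mul_assoc, h2, ← mul_assoc, h1, neg_mul, mul_assoc]

theorem sl_comm_mul {A B C : SLEleven} (h1 : C * A = A * C) (h2 : B * A = A * B) :
    (C * B) * A = A * (C * B) := by
  rw [mul_assoc, h2, ← mul_assoc, h1, mul_assoc]

/-- Every abelian subgroup of PSL(2, F_11) is cyclic or isomorphic to (ℤ/2ℤ)². -/
theorem abelian_subgroup_psl2_f11_cyclic_or_klein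
    (H : Subgroup (Matrix.SpecialLinearGroup (Fin 2) (ZMod 11) ⧸
      Subgroup.center (Matrix.SpecialLinearGroup (Fin 2) (ZMod 11))))
    (hH : ∀ x y : H, x * y = y * x) :
    IsCyclic H ∨ Nonempty (H ≃* Multiplicative (ZMod 2 × ZMod 2)) := by
  have hlift (A B : SLEleven) (hA : QuotientGroup.mk A ∈ H) (hB : QuotientGroup.mk B ∈ H) :
      A * B = B * A ∨ A * B = -(B * A) := by
    apply psl_mk_eq
    exact congrArg Subtype.val (hH ⟨_, hA⟩ ⟨_, hB⟩)
  by_cases hcase : ∃ A B : SLEleven, QuotientGroup.mk A ∈ H ∧ QuotientGroup.mk B ∈ H ∧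
      A * B = -(B * A)
  · right
    obtain ⟨A, B, hA, hB, hAB⟩ := hcase
    have hBA : B * A = -(A * B) := by rw [hAB, neg_neg]
    have hnc := sl_not_both hAB
    have hAA := sl_sq_of_anticomm hAB
    have hBB := sl_sq_of_anticomm hBA
    have key (C X : SLEleven) (hX : C * X = 1 ∨ C * X = -1) :
        (QuotientGroup.mk C : SLEleven ⧸ Subgroup.center SLEleven) = (QuotientGroup.mk X)⁻¹ := by
      rw [eq_inv_iff_mul_eq_one]
      exact psl_mk_eq_one.mpr hX
    have ha2 : (QuotientGroup.mk A : SLEleven ⧸ Subgroup.center SLEleven)⁻¹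
        = QuotientGroup.mk A := (key A A (Or.inr hAA)).symm
    have hb2 : (QuotientGroup.mk B : SLEleven ⧸ Subgroup.center SLEleven)⁻¹
        = QuotientGroup.mk B := (key B B (Or.inr hBB)).symm
    have hK : IsKleinFour H := by
      apply klein_list (a := ⟨QuotientGroup.mk A, hA⟩) (b := ⟨QuotientGroup.mk B, hB⟩)
      · exact Subtype.ext (psl_mk_eq_one.mpr (Or.inr hAA))
      · exact Subtype.ext (psl_mk_eq_one.mpr (Or.inr hBB))
      · exact hH _ _
      · intro h
        rcases psl_mk_eq_one.mp (congrArg Subtype.val h) with rfl | rfl <;> simp at hnc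
      · intro h
        rcases psl_mk_eq_one.mp (congrArg Subtype.val h) with rfl | rfl <;> simp at hnc
      · intro h
        rcases psl_mk_eq (congrArg Subtype.val h) with rfl | rfl <;> simp at hnc
      · rintro ⟨x, hx⟩
        induction x using QuotientGroup.induction_on with
        | H C =>
          simp only [Subtype.ext_iff]
          rcases hlift C A hx hA with h1 | h1 <;> rcases hlift C B hx hB with h2 | h2
          · left
            exact psl_mk_eq_one.mpr (sl_central h1 h2 hnc)
          · right; left
            have := key C A (sl_central (sl_comm_mul h1 rfl) (sl_anti_mul h2 hAB) hnc)
            exact this.trans ha2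
          · right; right; left
            have := key C B (sl_central (sl_anti_mul h1 hBA) (sl_comm_mul h2 rfl) hnc)
            exact this.trans hb2
          · right; right; right
            have h3 := sl_central (C := C * A * B) (sl_anti_mul (sl_anti_mul_comm h1 rfl) hBA)
              (sl_comm_mul (sl_anti_mul h2 hAB) rfl) hnc
            rw [mul_assoc] at h3
            have := key C (A * B) h3
            refine this.trans ?_
            have h4 := congrArg Subtype.val (hH ⟨_, hA⟩ ⟨_, hB⟩)
            rw [QuotientGroup.mk_mul, mul_inv_rev, ha2, hb2]
            exact h4.symm
    exact IsKleinFour.nonempty_mulEquiv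
  · left
    push Not at hcase
    have hinv (A : SLEleven) (h : (QuotientGroup.mk A *  QuotientGroup.mk A :
        SLEleven ⧸ Subgroup.center SLEleven) = 1)
        (hne : (QuotientGroup.mk A : SLEleven ⧸ Subgroup.center SLEleven) ≠ 1) :
        A * A = -1 := by
      rcases psl_mk_eq_one.mp h with h1 | h1
      · exact absurd (psl_mk_eq_one.mpr (sl_of_sq_one h1)) hne
      · exact h1
    apply cyclic_of_unique_involution hH
    · exact (Subgroup.card_subgroup_dvd_card H).trans psl_card
    · rintro ⟨x, hx⟩ ⟨y, hy⟩ hxx hyy hx1 hy1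
      induction x using QuotientGroup.induction_on with
      | H A =>
      induction y using QuotientGroup.induction_on with
      | H B =>
        have hA := hinv A (congrArg Subtype.val hxx) (fun h => hx1 (Subtype.ext h))
        have hB := hinv B (congrArg Subtype.val hyy) (fun h => hy1 (Subtype.ext h))
        have hc := (hlift A B hx hy).resolve_right (hcase A B hx hy)
        have hsq : (A * B) * (A * B) = 1 := by
          calc (A * B) * (A * B) = (A * B) * (B * A) := by rw [← hc]
            _ = A * (B * B) * A := by group
            _ = 1 := by rw [hB]; simp [hA]
        have h1 : (QuotientGroup.mk A * QuotientGroup.mk B :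
            SLEleven ⧸ Subgroup.center SLEleven) = 1 :=
          psl_mk_eq_one.mpr (sl_of_sq_one hsq)
        apply Subtype.ext
        change (QuotientGroup.mk A : SLEleven ⧸ Subgroup.center SLEleven) = QuotientGroup.mk B
        have h2 : (QuotientGroup.mk B * QuotientGroup.mk B :
            SLEleven ⧸ Subgroup.center SLEleven) = 1 := congrArg Subtype.val hyy
        exact mul_right_cancel (h1.trans h2.symm)
end

section
/- Every Sylow 2-subgroup of PSL(2, F_11) is isomorphic to (Z/2Z)^2. -/
open Matrix in
theorem sl_card_aux : Nat.card (SpecialLinearGroup (Fin 2) (ZMod 11)) = 1320 := by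
  have : Fact (Nat.Prime 11) := ⟨by norm_num⟩
  have hG := Matrix.card_GL_field (𝔽 := ZMod 11) 2
  have hsurj : Function.Surjective (GeneralLinearGroup.det (n := Fin 2) (R := ZMod 11)) := by
    intro u
    refine ⟨GeneralLinearGroup.mkOfDetNeZero !![(u : ZMod 11), 0; 0, 1] (by simp), ?_⟩
    ext
    simp [GeneralLinearGroup.mkOfDetNeZero]
  have hq := Nat.card_congr (QuotientGroup.quotientKerEquivOfSurjective _ hsurj).toEquiv
  have hm := Subgroup.card_eq_card_quotient_mul_card_subgroup
    (GeneralLinearGroup.det (n := Fin 2) (R := ZMod 11)).ker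
  have hk : Nat.card (GeneralLinearGroup.det (n := Fin 2) (R := ZMod 11)).ker
      = Nat.card (SpecialLinearGroup (Fin 2) (ZMod 11)) := by
    refine Nat.card_congr ⟨fun g => ⟨g.1.1, ?_⟩, fun s => ⟨(s : GL (Fin 2) (ZMod 11)), ?_⟩, ?_, ?_⟩
    · have := congrArg Units.val g.2
      simpa using this
    · rw [MonoidHom.mem_ker]
      ext
      simp
    · intro g
      ext
      rfl
    · intro s
      ext
      simp
  have hu : Nat.card (ZMod 11)ˣ = 10 := by
    rw [Nat.card_eq_fintype_card, ZMod.card_units]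
  rw [hk, hq, hu, hG] at hm
  rw [Fin.prod_univ_two] at hm
  simp only [ZMod.card] at hm
  simp only [Fin.val_zero, Fin.val_one, pow_zero, pow_one] at hm
  omega

open Matrix in
theorem center_card_aux :
    Nat.card (Subgroup.center (SpecialLinearGroup (Fin 2) (ZMod 11))) = 2 := by
  have : Fact (Nat.Prime 11) := ⟨by norm_num⟩
  have : NeZero (2 : ℕ) := ⟨by norm_num⟩
  rw [Nat.card_congr (SpecialLinearGroup.center_equiv_rootsOfUnity' (0 : Fin 2)).toEquiv,
    Fintype.card_fin]
  have h : IsPrimitiveRoot (-1 : ZMod 11) 2 := by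
    exact IsPrimitiveRoot.neg_one 11 (by norm_num)
  have h2 := h.card_rootsOfUnity
  exact h2

open Matrix in
theorem sq_center_aux (A : SpecialLinearGroup (Fin 2) (ZMod 11))
    (h : A ^ 4 ∈ Subgroup.center (SpecialLinearGroup (Fin 2) (ZMod 11))) :
    A ^ 2 ∈ Subgroup.center (SpecialLinearGroup (Fin 2) (ZMod 11)) := by
  have hsq : ∀ t : ZMod 11, t ^ 2 - 2 ≠ 0 := by decide
  have : Fact (Nat.Prime 11) := ⟨by norm_num⟩
  by_cases hA : A ∈ Subgroup.center (SpecialLinearGroup (Fin 2) (ZMod 11))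
  · exact Subgroup.pow_mem _ hA 2
  obtain ⟨r, -, hr⟩ := Matrix.SpecialLinearGroup.mem_center_iff.1 h
  have hdet := A.2
  rw [det_fin_two] at hdet
  have key : ∀ i j, (scalar (Fin 2) r) i j = ((A : Matrix (Fin 2) (Fin 2) (ZMod 11)) ^ 4) i j := by
    intro i j; rw [hr]; simp
  have k01 := key 0 1
  have k10 := key 1 0
  have k00 := key 0 0
  have k11 := key 1 1
  simp [pow_succ, Matrix.mul_apply, Fin.sum_univ_two] at k01 k10 k00 k11
  set a := A.1 0 0 with ha
  set b := A.1 0 1 with hb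
  set c := A.1 1 0 with hc
  set d := A.1 1 1 with hd
  have e1 : (a + d) * ((a + d) ^ 2 - 2) * b = 0 := by
    linear_combination (-1 : ZMod 11) * k01 + (2 * b * (a + d)) * hdet
  have e2 : (a + d) * ((a + d) ^ 2 - 2) * c = 0 := by
    linear_combination (-1 : ZMod 11) * k10 + (2 * c * (a + d)) * hdet
  have e3 : (a + d) * ((a + d) ^ 2 - 2) * (a - d) = 0 := by
    linear_combination k11 - k00 + (2 * (a - d) * (a + d)) * hdet
  by_cases ht : a + d = 0
  · refine Matrix.SpecialLinearGroup.mem_center_iff.2 ⟨-1, by simp, ?_⟩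
    ext i j
    fin_cases i <;> fin_cases j <;>
      simp [pow_succ, Matrix.mul_apply, Fin.sum_univ_two, ← ha, ← hb, ← hc, ← hd]
    · linear_combination hdet - a * ht
    · linear_combination -b * ht
    · linear_combination -c * ht
    · linear_combination hdet - d * ht
  · exfalso
    apply hA
    have hn : (a + d) * ((a + d) ^ 2 - 2) ≠ 0 := mul_ne_zero ht (hsq _)
    have hb0 : b = 0 := (mul_eq_zero.1 e1).resolve_left hn
    have hc0 : c = 0 := (mul_eq_zero.1 e2).resolve_left hn
    have had : a = d := sub_eq_zero.1 ((mul_eq_zero.1 e3).resolve_left hn)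
    refine Matrix.SpecialLinearGroup.mem_center_iff.2 ⟨a, ?_, ?_⟩
    · simp only [Fintype.card_fin]
      linear_combination hdet + a * had + c * hb0
    · ext i j
      fin_cases i <;> fin_cases j <;> simp [← ha, ← hb, ← hc, ← hd, hb0, hc0, had]

/-- Every Sylow 2-subgroup of PSL(2, F_11) is isomorphic to (ℤ/2ℤ)². -/
theorem sylow_two_psl2_f11_klein
    (P : Sylow 2 (Matrix.SpecialLinearGroup (Fin 2) (ZMod 11) ⧸
      Subgroup.center (Matrix.SpecialLinearGroup (Fin 2) (ZMod 11)))) :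
    Nonempty (P ≃* Multiplicative (ZMod 2 × ZMod 2)) := by
  have hm := Subgroup.card_eq_card_quotient_mul_card_subgroup
    (Subgroup.center (Matrix.SpecialLinearGroup (Fin 2) (ZMod 11)))
  rw [sl_card_aux, center_card_aux] at hm
  have hP : Nat.card P = 4 := by
    have hf : Nat.factorization 660 2 = 2 := by
      rw [Nat.factorization_def _ Nat.prime_two]
      rw [show 660 = 2 ^ 2 * 165 by norm_num, padicValNat.mul (by norm_num) (by norm_num),
        padicValNat.prime_pow, padicValNat.eq_zero_of_not_dvd (by norm_num)]
    rw [P.card_eq_multiplicity, show Nat.card _ = 660 by omega, hf]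
    norm_num
  have hsq : ∀ x : P, x ^ 2 = 1 := by
    intro x
    have h4 : x ^ 4 = 1 := by rw [← hP]; exact pow_card_eq_one'
    obtain ⟨y, hy⟩ := x
    obtain ⟨A, rfl⟩ := QuotientGroup.mk_surjective y
    have h4' := congrArg Subtype.val h4
    apply Subtype.ext
    change (QuotientGroup.mk A) ^ 2 = 1
    change (QuotientGroup.mk A) ^ 4 = 1 at h4'
    rw [← QuotientGroup.mk_pow, QuotientGroup.eq_one_iff] at h4' ⊢
    exact sq_center_aux A h4'
  have : Finite P := Nat.finite_of_card_ne_zero (by omega)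
  have : Nontrivial P := Finite.one_lt_card_iff_nontrivial.1 (by omega)
  have : IsKleinFour P := ⟨hP, by
    have hd := Monoid.exponent_dvd_of_forall_pow_eq_one hsq
    rcases (Nat.dvd_prime Nat.prime_two).1 hd with h | h
    · exact absurd (Monoid.exp_eq_one_iff.1 h) (not_subsingleton _)
    · exact h⟩
  have : IsKleinFour (Multiplicative (ZMod 2 × ZMod 2)) := inferInstance
  exact IsKleinFour.nonempty_mulEquiv
end

section
/- Let U be an irreducible complex representation of SL(2, F_8) of dimension 9, and let χ_U be its character. Then for every nonzero a ∈ F_8, the value of χ_U at the unipotent matrix with rows (1, a) and (0, 1) equals 1. -/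
open Matrix

/-- A two by two matrix of determinant one from its entries. -/
def mkSL {F : Type} [Field F] (a b c d : F) (h : a * d - b * c = 1) :
    Matrix.SpecialLinearGroup (Fin 2) F :=
  ⟨!![a, b; c, d], by rw [Matrix.det_fin_two_of, h]⟩

theorem mkSL_coe {F : Type} [Field F] (a b c d : F) (h : a * d - b * c = 1) :
    (mkSL a b c d h : Matrix (Fin 2) (Fin 2) F) = !![a, b; c, d] := rfl

theorem sl_ext_s5 {F : Type} [Field F] {g h : Matrix.SpecialLinearGroup (Fin 2) F}
    (e : (g : Matrix (Fin 2) (Fin 2) F) = h) : g = h := Subtype.ext e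

theorem mat_ext {F : Type} {a b c d a' b' c' d' : F} (h1 : a = a') (h2 : b = b')
    (h3 : c = c') (h4 : d = d') : !![a, b; c, d] = !![a', b'; c', d'] := by
  rw [h1, h2, h3, h4]

/-- The homomorphism from the additive group to the upper unipotent matrices. -/
noncomputable def upperHom (F : Type) [Field F] :
    Multiplicative F →* Matrix.SpecialLinearGroup (Fin 2) F where
  toFun x := mkSL 1 x.toAdd 0 1 (by ring)
  map_one' := by
    apply sl_ext_s5
    rw [mkSL_coe, Matrix.SpecialLinearGroup.coe_one, Matrix.one_fin_two]; rfl
  map_mul' x y := by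
    apply sl_ext_s5
    rw [Matrix.SpecialLinearGroup.coe_mul, mkSL_coe, mkSL_coe, mkSL_coe]
    simp [Matrix.mul_fin_two, add_comm]

theorem upperHom_coe {F : Type} [Field F] (x : F) :
    (upperHom F (Multiplicative.ofAdd x) : Matrix (Fin 2) (Fin 2) F) = !![1, x; 0, 1] := rfl

theorem upperHom_conj {F : Type} [Field F] (x t : F) (ht : t ≠ 0) :
    ∃ h : Matrix.SpecialLinearGroup (Fin 2) F,
      h * upperHom F (Multiplicative.ofAdd x) * h⁻¹
        = upperHom F (Multiplicative.ofAdd (t * t * x)) := by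
  refine ⟨mkSL t 0 0 t⁻¹ (by simp [ht]), ?_⟩
  rw [mul_inv_eq_iff_eq_mul]
  apply sl_ext_s5
  rw [Matrix.SpecialLinearGroup.coe_mul, Matrix.SpecialLinearGroup.coe_mul, mkSL_coe,
    upperHom_coe, upperHom_coe, Matrix.mul_fin_two, Matrix.mul_fin_two]
  congr! 3 <;> field_simp <;> simp

/-- A homomorphism killing the upper unipotents is trivial. -/
theorem hom_trivial {F : Type} [Field F] {M : Type*} [Monoid M]
    (ρ : Matrix.SpecialLinearGroup (Fin 2) F →* M)
    (h : ∀ x : F, ρ (upperHom F (Multiplicative.ofAdd x)) = 1)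
    (g : Matrix.SpecialLinearGroup (Fin 2) F) : ρ g = 1 := by
  let w : Matrix.SpecialLinearGroup (Fin 2) F := mkSL 0 1 (-1) 0 (by ring)
  let l : F → Matrix.SpecialLinearGroup (Fin 2) F := fun c => mkSL 1 0 c 1 (by ring)
  have lcoe : ∀ c, (l c : Matrix (Fin 2) (Fin 2) F) = !![1, 0; c, 1] := fun c => rfl
  have wcoe : (w : Matrix (Fin 2) (Fin 2) F) = !![0, 1; -1, 0] := rfl
  have hl : ∀ c, ρ (l c) = 1 := by
    intro c
    have e : l c = w * upperHom F (Multiplicative.ofAdd (-c)) * w⁻¹ := by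
      rw [eq_mul_inv_iff_mul_eq]
      apply sl_ext_s5
      rw [Matrix.SpecialLinearGroup.coe_mul, Matrix.SpecialLinearGroup.coe_mul, wcoe,
        upperHom_coe, lcoe, Matrix.mul_fin_two, Matrix.mul_fin_two]
      simp
    rw [e, map_mul, map_mul, h, mul_one, ← map_mul, mul_inv_cancel, map_one]
  have key : ∀ g : Matrix.SpecialLinearGroup (Fin 2) F,
      (g : Matrix (Fin 2) (Fin 2) F) 1 0 ≠ 0 → ρ g = 1 := by
    intro g hc
    have hd := g.2
    rw [Matrix.det_fin_two] at hd
    have e : g = upperHom F (Multiplicative.ofAdd ((g.1 0 0 - 1) / g.1 1 0)) * l (g.1 1 0) *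
        upperHom F (Multiplicative.ofAdd ((g.1 1 1 - 1) / g.1 1 0)) := by
      apply sl_ext_s5
      rw [Matrix.SpecialLinearGroup.coe_mul, Matrix.SpecialLinearGroup.coe_mul, lcoe,
        upperHom_coe, upperHom_coe, Matrix.mul_fin_two, Matrix.mul_fin_two]
      conv_lhs => rw [Matrix.eta_fin_two (g : Matrix (Fin 2) (Fin 2) F)]
      generalize (g : Matrix (Fin 2) (Fin 2) F) = A at *
      generalize A 0 0 = a at *
      generalize A 0 1 = b at *
      generalize A 1 0 = c at *
      generalize A 1 1 = d at *
      have e1 : (a - 1) / c * c = a - 1 := div_mul_cancel₀ _ hc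
      have e2 : c * ((d - 1) / c) = d - 1 := mul_div_cancel₀ _ hc
      have e3 : b = a * ((d - 1) / c) + (a - 1) / c := by
        field_simp
        linear_combination -hd
      apply mat_ext
      · linear_combination -e1
      · linear_combination e3 - ((d - 1) / c) * e1
      · ring
      · linear_combination -e2
    rw [e, map_mul, map_mul, h, h, hl, mul_one, mul_one]
  by_cases hc : (g : Matrix (Fin 2) (Fin 2) F) 1 0 = 0
  · have hd := g.2
    rw [Matrix.det_fin_two, hc, mul_zero, sub_zero] at hd
    have h1 : ρ (g * l 1) = 1 := by
      apply key
      rw [Matrix.SpecialLinearGroup.coe_mul, lcoe, Matrix.mul_apply, Fin.sum_univ_two, hc]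
      intro h0
      have h0' : (g : Matrix (Fin 2) (Fin 2) F) 1 1 = 0 := by simpa using h0
      rw [h0', mul_zero] at hd
      exact zero_ne_one hd
    rwa [map_mul, hl, mul_one] at h1
  · exact key g hc

theorem trace_involution {V : Type*} [AddCommGroup V] [Module ℂ V] [FiniteDimensional ℂ V]
    (T : V →ₗ[ℂ] V) (hT : T * T = 1) :
    ∃ k : ℕ, LinearMap.trace ℂ V T = 2 * (k : ℂ) - Module.finrank ℂ V := by
  have hT' : ∀ v, T (T v) = v := fun v => LinearMap.congr_fun hT v
  have hp : LinearMap.IsProj (LinearMap.ker (T - 1)) ((2 : ℂ)⁻¹ • (1 + T)) := by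
    constructor
    · intro v
      simp [hT', sub_eq_zero, add_comm]
    · intro v hv
      have : T v = v := by simpa [sub_eq_zero] using hv
      simp only [LinearMap.smul_apply, LinearMap.add_apply, Module.End.one_apply, this]
      rw [← two_smul ℂ v, smul_smul]; norm_num
  refine ⟨Module.finrank ℂ (LinearMap.ker (T - 1)), ?_⟩
  have := hp.trace
  simp only [map_smul, map_add, LinearMap.trace_one, smul_eq_mul] at this
  rw [← this]
  ring

theorem char_sl2_f8_dim9_unipotent
    (U : FDRep ℂ (Matrix.SpecialLinearGroup (Fin 2) (GaloisField 2 3)))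
    [CategoryTheory.Simple U]
    (hdim : Module.finrank ℂ U = 9)
    (a : GaloisField 2 3) (ha : a ≠ 0)
    (g : Matrix.SpecialLinearGroup (Fin 2) (GaloisField 2 3))
    (hg : (g : Matrix (Fin 2) (Fin 2) (GaloisField 2 3)) = !![1, a; 0, 1]) :
    U.character g = 1 := by
  classical
  haveI : Fintype (GaloisField 2 3) := Fintype.ofFinite _
  have hcard : Nat.card (GaloisField 2 3) = 8 := by
    rw [GaloisField.card 2 3 (by norm_num)]; norm_num
  have hg' : g = upperHom _ (Multiplicative.ofAdd a) := by
    apply sl_ext_s5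
    rw [hg, upperHom_coe]
  have hconst : ∀ x : GaloisField 2 3, x ≠ 0 →
      U.character (upperHom _ (Multiplicative.ofAdd x)) = U.character g := by
    intro x hx
    obtain ⟨t, ht⟩ := FiniteField.isSquare_of_char_two (ringChar.eq (GaloisField 2 3) 2) (x / a)
    have ht0 : t ≠ 0 := by
      rintro rfl
      simp [hx, ha] at ht
    obtain ⟨h, hh⟩ := upperHom_conj a t ht0
    rw [← ht, div_mul_cancel₀ _ ha] at hh
    rw [← hh, FDRep.char_conj, hg']
  obtain ⟨k, hk⟩ := trace_involution (U.ρ g) (by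
    rw [← map_mul, hg', ← map_mul, ← ofAdd_add, CharTwo.add_self_eq_zero]
    simp)
  rw [hdim] at hk
  change U.character g = _ at hk
  let σ : Representation ℂ (Multiplicative (GaloisField 2 3)) U :=
    U.ρ.comp (upperHom _)
  haveI : Fintype (Multiplicative (GaloisField 2 3)) := Fintype.ofFinite _
  have hcard' : Nat.card (Multiplicative (GaloisField 2 3)) = 8 := hcard
  haveI : Invertible (Nat.card (Multiplicative (GaloisField 2 3)) : ℂ) :=
    invertibleOfNonzero (by rw [hcard']; norm_num)
  have hm := Representation.card_inv_mul_sum_char_eq_finrank σ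
  have hsum : ∑ x, σ.character x = 9 + 7 * U.character g := by
    rw [← Finset.add_sum_erase _ _ (Finset.mem_univ 1), Representation.char_one, hdim]
    rw [Finset.sum_congr rfl (g := fun _ => U.character g)]
    · rw [Finset.sum_const, Finset.card_erase_of_mem (Finset.mem_univ _), Finset.card_univ,
        ← Nat.card_eq_fintype_card, hcard']
      norm_num
    · intro x hx
      exact hconst x.toAdd (fun h => (Finset.mem_erase.mp hx).1 h)
  rw [hsum, hcard'] at hm
  have hle : Module.finrank ℂ σ.invariants ≤ 9 := hdim ▸ Submodule.finrank_le _
  have heq : 7 * k = 27 + 4 * Module.finrank ℂ σ.invariants := by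
    have : (7 * k : ℂ) = 27 + 4 * Module.finrank ℂ σ.invariants := by
      rw [← hm, hk]; push_cast; ring
    exact_mod_cast this
  by_cases h9 : Module.finrank ℂ σ.invariants = 9
  · exfalso
    have htop := Submodule.eq_top_of_finrank_eq (h9.trans hdim.symm)
    have htriv : ∀ y, U.ρ y = 1 := by
      apply hom_trivial
      intro x
      ext v
      have hv : v ∈ σ.invariants := htop ▸ Submodule.mem_top
      exact hv (Multiplicative.ofAdd x)
    haveI : Fintype (Matrix.SpecialLinearGroup (Fin 2) (GaloisField 2 3)) := Fintype.ofFinite _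
    have hN : (Nat.card (Matrix.SpecialLinearGroup (Fin 2) (GaloisField 2 3)) : ℂ) ≠ 0 := by
      exact_mod_cast Nat.card_pos.ne'
    haveI := invertibleOfNonzero hN
    have ho := FDRep.char_orthonormal U U
    have hc : ∀ y, U.character y = 9 := by
      intro y
      rw [FDRep.character, htriv, LinearMap.trace_one, hdim]; norm_num
    simp only [hc, Finset.sum_const, Finset.card_univ, ← Nat.card_eq_fintype_card,
      nsmul_eq_mul] at ho
    rw [inv_mul_cancel_left₀ hN, if_pos ⟨CategoryTheory.Iso.refl _⟩] at ho
    norm_num at ho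
  · have : k = 5 := by omega
    rw [hk, this]; norm_num
end

section
/- Let U be an irreducible complex representation of SL(2, F_8) of dimension 9, and let N be the subgroup of SL(2, F_8) consisting of the unipotent upper-triangular matrices with rows (1, a) and (0, 1) for a ∈ F_8. Then the restriction of U to N is isomorphic, as a representation of N, to the direct sum of the regular representation of N and the one-dimensional trivial representation. Equivalently, every nontrivial one-dimensional character of N occurs in U|_N with multiplicity 1, and the trivial character occurs with multiplicity 2. -/
open Matrix

namespace RegPlusTriv

section rep
variable {N V : Type*} [Group N] [AddCommGroup V] [Module ℂ V]

/-- The twist of a representation by the inverse of a linear character. -/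
noncomputable def twist (σ : N →* Module.End ℂ V) (lam : N →* ℂˣ) : Representation ℂ N V where
  toFun n := ((lam n⁻¹ : ℂˣ) : ℂ) • σ n
  map_one' := by simp
  map_mul' a b := by
    simp only [_root_.mul_inv_rev, map_mul, Units.val_mul, smul_mul_smul_comm]
    rw [mul_comm]

theorem twist_invariants (σ : N →* Module.End ℂ V) (lam : N →* ℂˣ) :
    (twist σ lam).invariants = ⨅ n : N, Module.End.eigenspace (σ n) (lam n : ℂ) := by
  ext v
  simp only [Representation.mem_invariants, Submodule.mem_iInf, Module.End.mem_eigenspace_iff]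
  refine forall_congr' fun n => ?_
  change ((lam n⁻¹ : ℂˣ) : ℂ) • σ n v = v ↔ _
  rw [map_inv]
  exact inv_smul_eq_iff (g := lam n)

theorem card_mul_finrank [Fintype N] [FiniteDimensional ℂ V] (σ : N →* Module.End ℂ V)
    (lam : N →* ℂˣ) :
    (Nat.card N : ℂ) * Module.finrank ℂ
      ↥(⨅ n : N, Module.End.eigenspace (σ n) (lam n : ℂ)) =
      ∑ n : N, ((lam n⁻¹ : ℂˣ) : ℂ) * LinearMap.trace ℂ V (σ n) := by
  have h0 : (Nat.card N : ℂ) ≠ 0 := by simp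
  have := invertibleOfNonzero h0
  rw [← twist_invariants, ← Representation.card_inv_mul_sum_char_eq_finrank,
    mul_inv_cancel_left₀ h0]
  refine Finset.sum_congr rfl fun n _ => ?_
  change LinearMap.trace ℂ V (((lam n⁻¹ : ℂˣ) : ℂ) • σ n) = _
  simp

/-- If the trace is constant equal to `x` off the identity, the multiplicities are explicit. -/
theorem mult_formula [Fintype N] [FiniteDimensional ℂ V] (σ : N →* Module.End ℂ V)
    (x : ℂ) (hx : ∀ n : N, n ≠ 1 → LinearMap.trace ℂ V (σ n) = x) (lam : N →* ℂˣ) :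
    (Nat.card N : ℂ) * Module.finrank ℂ
      ↥(⨅ n : N, Module.End.eigenspace (σ n) (lam n : ℂ)) =
      (Module.finrank ℂ V - x) + x * (if lam = 1 then (Nat.card N : ℂ) else 0) := by
  classical
  rw [card_mul_finrank]
  have h1 : ∀ n : N, ((lam n⁻¹ : ℂˣ) : ℂ) * LinearMap.trace ℂ V (σ n) =
      (if n = 1 then (Module.finrank ℂ V - x) else 0) + x * ((lam n⁻¹ : ℂˣ) : ℂ) := by
    intro n
    split_ifs with h
    · subst h; simp
    · rw [hx n h]; ring
  rw [Finset.sum_congr rfl fun n _ => h1 n, Finset.sum_add_distrib, ← Finset.mul_sum]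
  congr 1
  · simp
  · congr 1
    have hinv : ∑ n : N, ((lam n⁻¹ : ℂˣ) : ℂ) = ∑ n : N, ((lam n : ℂˣ) : ℂ) :=
      Fintype.sum_equiv (Equiv.inv N) _ _ fun n => rfl
    rw [hinv]
    split_ifs with h
    · subst h; simp
    · have := sum_hom_units_eq_zero ((Units.coeHom ℂ).comp lam) (by
        intro h'
        apply h
        ext n
        simpa using DFunLike.congr_fun h' n)
      simpa using this

end rep

section sl
variable {F : Type*} [Field F]

/-- The underlying matrix. -/
def toMat (g : SpecialLinearGroup (Fin 2) F) : Matrix (Fin 2) (Fin 2) F := g.1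

theorem slext {g h : SpecialLinearGroup (Fin 2) F} (H : toMat g = toMat h) : g = h := Subtype.ext H

theorem toMat_mul (g h : SpecialLinearGroup (Fin 2) F) : toMat (g * h) = toMat g * toMat h := rfl

/-- Upper unipotent matrices. -/
def up : Multiplicative F →* SpecialLinearGroup (Fin 2) F where
  toFun a := ⟨!![1, a.toAdd; 0, 1], by simp⟩
  map_one' := by
    ext i j; fin_cases i <;> fin_cases j <;> simp
  map_mul' a b := by
    apply slext
    change !![1, a.toAdd + b.toAdd; 0, 1] = !![1, a.toAdd; 0, 1] * !![1, b.toAdd; 0, 1]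
    simp [add_comm]

theorem up_val (a : Multiplicative F) :
    toMat (up a) = !![1, a.toAdd; 0, 1] := rfl

theorem up_inj : Function.Injective (up : Multiplicative F →* SpecialLinearGroup (Fin 2) F) := by
  intro a b h
  have := congrArg (fun g : SpecialLinearGroup (Fin 2) F => toMat g 0 1) h
  simp only [up_val] at this
  simpa using this

/-- The diagonal matrix. -/
def dg (t : Fˣ) : SpecialLinearGroup (Fin 2) F := ⟨!![(t : F), 0; 0, (↑t⁻¹ : F)], by simp⟩

/-- The Weyl element. -/
def wl : SpecialLinearGroup (Fin 2) F := ⟨!![0, 1; -1, 0], by simp⟩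

theorem dg_val (t : Fˣ) :
    toMat (dg t) = !![(t : F), 0; 0, (↑t⁻¹ : F)] := rfl

theorem wl_val :
    toMat (wl : SpecialLinearGroup (Fin 2) F) = !![0, 1; -1, 0] := rfl

theorem conj_up (t : Fˣ) :
    dg t * up (Multiplicative.ofAdd 1) * (dg t)⁻¹ = up (Multiplicative.ofAdd ((t : F) ^ 2)) := by
  rw [mul_inv_eq_iff_eq_mul]
  apply slext
  rw [toMat_mul, toMat_mul, up_val, up_val, dg_val]
  simp [pow_two]

theorem normal_top (K : Subgroup (SpecialLinearGroup (Fin 2) F)) [hK : K.Normal]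
    (h : ∀ a, up a ∈ K) : K = ⊤ := by
  have hl : ∀ c : F, ∀ g : SpecialLinearGroup (Fin 2) F, toMat g = !![1, 0; c, 1] → g ∈ K := by
    intro c g hg
    have := hK.conj_mem _ (h (Multiplicative.ofAdd (-c))) wl
    convert this
    rw [eq_mul_inv_iff_mul_eq]
    apply slext
    rw [toMat_mul, toMat_mul, hg, wl_val, up_val]
    simp
  have hc : ∀ g : SpecialLinearGroup (Fin 2) F, toMat g 1 0 ≠ 0 → g ∈ K := by
    intro g hg
    have hd : (toMat g).det = 1 := g.2
    rw [Matrix.det_fin_two] at hd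
    set c := toMat g 1 0 with hcdef
    let l : SpecialLinearGroup (Fin 2) F := ⟨!![1, 0; c, 1], by simp⟩
    have : g = up (Multiplicative.ofAdd ((toMat g 0 0 - 1) / c)) * l *
        up (Multiplicative.ofAdd ((toMat g 1 1 - 1) / c)) := by
      apply slext
      have hlv : toMat l = !![1, 0; c, 1] := rfl
      rw [toMat_mul, toMat_mul, up_val, up_val, hlv,
        Matrix.eta_fin_two (toMat g), ← hcdef]
      generalize toMat g 0 0 = p at *
      generalize toMat g 0 1 = q at *
      generalize toMat g 1 1 = s at *
      clear_value c
      ext i j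
      fin_cases i <;> fin_cases j <;> simp <;> field_simp <;> grind
    rw [this]
    exact K.mul_mem (K.mul_mem (h _) (hl c l rfl)) (h _)
  rw [eq_top_iff]
  intro g _
  by_cases hg : toMat g 1 0 = 0
  · let l : SpecialLinearGroup (Fin 2) F := ⟨!![1, 0; 1, 1], by simp⟩
    have h2 : l * g ∈ K := by
      apply hc
      have hd : (toMat g).det = 1 := g.2
      rw [Matrix.det_fin_two, hg] at hd
      have : toMat (l * g) 1 0 = toMat g 0 0 := by
        rw [toMat_mul]
        have hlv : toMat l = !![1, 0; 1, 1] := rfl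
        simp [hlv, Matrix.mul_apply, hg]
      rw [this]
      intro h0
      rw [h0] at hd
      simp at hd
    exact (K.mul_mem_cancel_left (hl 1 l rfl)).1 h2
  · exact hc g hg

theorem main [Finite F] (hF : Nat.card F = 8)
    (U : FDRep ℂ (SpecialLinearGroup (Fin 2) F)) [CategoryTheory.Simple U]
    (hdim : Module.finrank ℂ U = 9)
    (N : Subgroup (SpecialLinearGroup (Fin 2) F)) (hN : N = up.range) (lam : N →* ℂˣ) :
    (lam = 1 → Module.finrank ℂ
      ↥(⨅ n : N, Module.End.eigenspace (U.ρ (n : SpecialLinearGroup (Fin 2) F)) (lam n : ℂ)) = 2) ∧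
    (lam ≠ 1 → Module.finrank ℂ
      ↥(⨅ n : N, Module.End.eigenspace (U.ρ (n : SpecialLinearGroup (Fin 2) F)) (lam n : ℂ)) = 1)
    := by
  classical
  have := Fintype.ofFinite F
  have := Fintype.ofFinite (SpecialLinearGroup (Fin 2) F)
  have := Fintype.ofFinite N
  let e : Multiplicative F ≃* N :=
    (MonoidHom.ofInjective up_inj).trans (MulEquiv.subgroupCongr hN.symm)
  have he : ∀ a, ((e a : N) : SpecialLinearGroup (Fin 2) F) = up a := fun a => rfl
  have hcard : Nat.card N = 8 := by
    rw [← Nat.card_congr e.toEquiv, ← hF]; rfl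
  let σ : N →* Module.End ℂ U := MonoidHom.comp U.ρ N.subtype
  let x : ℂ := LinearMap.trace ℂ U (U.ρ (up (Multiplicative.ofAdd 1)))
  have hx : ∀ n : N, n ≠ 1 → LinearMap.trace ℂ U (σ n) = x := by
    intro n hn
    obtain ⟨a, rfl⟩ := e.surjective n
    have ha : a.toAdd ≠ 0 := by
      intro h
      apply hn
      have : a = 1 := h
      rw [this, map_one]
    have h8 : a.toAdd ^ 8 = a.toAdd := by
      have := FiniteField.pow_card a.toAdd
      rwa [← Nat.card_eq_fintype_card, hF] at this
    let t : Fˣ := Units.mk0 (a.toAdd ^ 4) (pow_ne_zero _ ha)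
    have ht : up a = dg t * up (Multiplicative.ofAdd 1) * (dg t)⁻¹ := by
      rw [conj_up]
      congr 1
      change a = Multiplicative.ofAdd ((a.toAdd ^ 4) ^ 2)
      rw [← pow_mul, h8]; rfl
    change LinearMap.trace ℂ U (U.ρ (up a)) = _
    rw [ht]
    exact FDRep.char_conj U _ _
  have key := mult_formula σ x hx
  rw [hcard, hdim] at key
  -- a nontrivial character
  obtain ⟨μ, hμ⟩ : ∃ μ : N →* ℂˣ, μ ≠ 1 := by
    obtain ⟨ψ, hψ⟩ := (AddChar.exists_apply_ne_zero (a := (1 : F))).2 one_ne_zero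
    refine ⟨(ψ.toMonoidHom.comp e.symm.toMonoidHom).toHomUnits, fun h => hψ ?_⟩
    have := congrArg (fun u : ℂˣ => (u : ℂ)) (DFunLike.congr_fun h (e (Multiplicative.ofAdd 1)))
    simpa using this
  set d : (N →* ℂˣ) → ℕ := fun lam => Module.finrank ℂ
      ↥(⨅ n : N, Module.End.eigenspace (σ n) (lam n : ℂ)) with hd
  have h1 := key 1
  have hne : ∀ ν : N →* ℂˣ, ν ≠ 1 → (8 : ℂ) * d ν = 9 - x := by
    intro ν hν
    have := key ν
    rw [if_neg hν] at this
    simpa using this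
  have h1' : (8 : ℂ) * d 1 = 9 - x + x * 8 := by
    rw [if_pos rfl] at h1
    exact_mod_cast h1
  have hsum : ∀ ν : N →* ℂˣ, ν ≠ 1 → d 1 + 7 * d ν = 9 := by
    intro ν hν
    have h2 := hne ν hν
    have : ((d 1 + 7 * d ν : ℕ) : ℂ) = (9 : ℕ) := by
      push_cast
      linear_combination (1 / 8) * h1' + (7 / 8) * h2
    exact_mod_cast this
  have h9 : d 1 ≠ 9 := by
    intro h9
    have htop : (⨅ n : N, Module.End.eigenspace (σ n) (((1 : N →* ℂˣ) n : ℂˣ) : ℂ)) = ⊤ :=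
      Submodule.eq_top_of_finrank_eq (h9.trans hdim.symm)
    have hker : (MonoidHom.ker U.ρ) = ⊤ := by
      apply normal_top
      intro a
      rw [MonoidHom.mem_ker]
      ext v
      have hv : v ∈ (⨅ n : N, Module.End.eigenspace (σ n) (((1 : N →* ℂˣ) n : ℂˣ) : ℂ)) := by
        rw [htop]; trivial
      have := (Submodule.mem_iInf _).1 hv (e a)
      rw [Module.End.mem_eigenspace_iff] at this
      change U.ρ (up a) v = _ at this
      simpa using this
    have htriv : ∀ g, U.character g = 9 := by
      intro g
      have : U.ρ g = 1 := by
        rw [← MonoidHom.mem_ker, hker]; trivial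
      rw [FDRep.character, this, LinearMap.trace_one, hdim]
      norm_num
    have h0 : (Nat.card (SpecialLinearGroup (Fin 2) F) : ℂ) ≠ 0 := by simp
    have := invertibleOfNonzero h0
    have := FDRep.char_orthonormal U U
    rw [if_pos ⟨CategoryTheory.Iso.refl _⟩, inv_mul_eq_iff_eq_mul₀ h0] at this
    simp only [htriv, Finset.sum_const, Finset.card_univ, nsmul_eq_mul,
      ← Nat.card_eq_fintype_card] at this
    have := mul_left_cancel₀ h0 this
    norm_num at this
  have hμ1 := hsum μ hμ
  have hd1 : d 1 = 2 := by omega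
  constructor
  · rintro rfl
    exact hd1
  · intro h
    have := hsum lam h
    change d lam = 1
    omega

end sl

end RegPlusTriv

/-- Let U be an irreducible 9-dimensional complex representation of SL(2, F_8), and N
the subgroup of unipotent upper-triangular matrices. Then in the restriction of U to N,
the trivial character of N occurs with multiplicity 2 and every nontrivial
one-dimensional character occurs with multiplicity 1 (i.e. U|_N is the direct sum of
the regular representation of N and the trivial one). -/
theorem restriction_to_unipotent_subgroup_regular_plus_trivial
    (U : FDRep ℂ (Matrix.SpecialLinearGroup (Fin 2) (GaloisField 2 3)))
    [CategoryTheory.Simple U]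
    (hdim : Module.finrank ℂ U = 9)
    (N : Subgroup (Matrix.SpecialLinearGroup (Fin 2) (GaloisField 2 3)))
    (hN : ∀ g : Matrix.SpecialLinearGroup (Fin 2) (GaloisField 2 3),
      g ∈ N ↔ ∃ a : GaloisField 2 3,
        (g : Matrix (Fin 2) (Fin 2) (GaloisField 2 3)) = !![1, a; 0, 1])
    (lam : N →* ℂˣ) :
    (lam = 1 →
      Module.finrank ℂ ↥
        (⨅ n : N, Module.End.eigenspace (U.ρ (n : Matrix.SpecialLinearGroup (Fin 2)
          (GaloisField 2 3))) (lam n : ℂ)) = 2) ∧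
    (lam ≠ 1 →
      Module.finrank ℂ ↥
        (⨅ n : N, Module.End.eigenspace (U.ρ (n : Matrix.SpecialLinearGroup (Fin 2)
          (GaloisField 2 3))) (lam n : ℂ)) = 1) := by
  refine RegPlusTriv.main (by rw [GaloisField.card 2 3 (by norm_num)]; norm_num) U hdim N ?_ lam
  ext g
  rw [hN, MonoidHom.mem_range]
  constructor
  · rintro ⟨a, ha⟩
    exact ⟨Multiplicative.ofAdd a, Subtype.ext ha.symm⟩
  · rintro ⟨a, rfl⟩
    exact ⟨a.toAdd, rfl⟩
end

section
/- Let N be a finite group in which every element has order dividing 2 (an elementary abelian 2-group), and let ρ be a representation of N on a finite-dimensional complex vector space U preserving a nondegenerate symmetric bilinear form B. Assume that for every nontrivial homomorphism λ : N → ℂ*, the eigenspace {v ∈ U : ρ(g)v = λ(g)·v for all g ∈ N} has dimension at most 1, and that the fixed subspace U^N = {v ∈ U : ρ(g)v = v for all g ∈ N} has dimension at most 2. Then every N-invariant subspace L of U on which B vanishes identically (i.e., B(v, w) = 0 for all v, w ∈ L) has dimension at most 1. -/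
/-- A vector of a character eigenspace orthogonal to that eigenspace is zero. -/
theorem eigen_orthogonal_eq_zero
    {N : Type*} [Group N] [Finite N] (hN2 : ∀ g : N, g ^ 2 = 1)
    {U : Type*} [AddCommGroup U] [Module ℂ U]
    (ρ : Representation ℂ N U) (B : LinearMap.BilinForm ℂ U)
    (hBnd : ∀ v : U, (∀ w : U, B v w = 0) → v = 0)
    (hBinv : ∀ (g : N) (v w : U), B (ρ g v) (ρ g w) = B v w)
    (lam : N →* ℂ) (w : U) (hw : ∀ g, ρ g w = lam g • w)
    (hx : ∀ x, (∀ g, ρ g x = lam g • x) → B w x = 0) : w = 0 := by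
  have := Fintype.ofFinite N
  have hl : ∀ g, lam g * lam g = 1 := fun g => by
    rw [← map_mul, ← pow_two, hN2, map_one]
  have hgg : ∀ g : N, g * g = 1 := fun g => by rw [← pow_two, hN2]
  apply hBnd
  intro u
  have h1 := hx (∑ g, lam g • ρ g u) (fun h => by
    rw [map_sum, Finset.smul_sum]
    refine Fintype.sum_equiv (Equiv.mulLeft h) _ _ (fun g => ?_)
    simp only [Equiv.coe_mulLeft, map_smul, map_mul, smul_smul, Module.End.mul_apply]
    rw [← mul_assoc, hl, one_mul])
  have h2 : ∀ g, B w (ρ g u) = lam g * B w u := fun g => by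
    rw [← hBinv g w (ρ g u), ← Module.End.mul_apply, ← map_mul, hgg, hw]
    simp
  simp only [map_sum, map_smul, h2, smul_eq_mul, ← mul_assoc, hl, one_mul,
    Finset.sum_const, nsmul_eq_mul, Finset.card_univ] at h1
  rcases mul_eq_zero.1 h1 with h | h
  · simp at h
  · exact h

/-- Let N be a finite elementary abelian 2-group acting on a finite-dimensional complex
vector space U preserving a nondegenerate symmetric bilinear form B. If every nontrivial
character eigenspace has dimension at most 1 and the fixed subspace has dimension at most 2,
then every N-invariant totally isotropic subspace of U has dimension at most 1. -/
theorem invariant_isotropic_subspace_dim_le_one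
    {N : Type*} [Group N] [Finite N] (hN2 : ∀ g : N, g ^ 2 = 1)
    {U : Type*} [AddCommGroup U] [Module ℂ U] [FiniteDimensional ℂ U]
    (ρ : Representation ℂ N U) (B : LinearMap.BilinForm ℂ U)
    (hBsymm : ∀ v w : U, B v w = B w v)
    (hBnd : ∀ v : U, (∀ w : U, B v w = 0) → v = 0)
    (hBinv : ∀ (g : N) (v w : U), B (ρ g v) (ρ g w) = B v w)
    (heig : ∀ lam : N →* ℂˣ, lam ≠ 1 →
      Module.finrank ℂ ↥(⨅ g : N, Module.End.eigenspace (ρ g) (lam g : ℂ)) ≤ 1)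
    (hfix : Module.finrank ℂ ↥(⨅ g : N, Module.End.eigenspace (ρ g) 1) ≤ 2)
    (L : Submodule ℂ U)
    (hLinv : ∀ (g : N), ∀ v ∈ L, ρ g v ∈ L)
    (hLiso : ∀ v ∈ L, ∀ w ∈ L, B v w = 0) :
    Module.finrank ℂ L ≤ 1 := by
  classical
  have hgg : ∀ g : N, g * g = 1 := fun g => by rw [← pow_two, hN2]
  have hcomm : ∀ g h : N, g * h = h * g := fun g h => by
    have hi : ∀ x : N, x⁻¹ = x := fun x => inv_eq_of_mul_eq_one_left (hgg x)
    rw [← hi (g * h), mul_inv_rev, hi, hi]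
  have hL1 : L ≤ ⨅ g : N, Module.End.eigenspace (ρ g) 1 := by
    let f : N → Module.End ℂ L := fun g => (ρ g).restrict (hLinv g)
    have hf : ∀ g (x : L), ((f g x : L) : U) = ρ g x := fun g x => rfl
    have hss : ∀ g, (f g).IsFinitelySemisimple := fun g => by
      rw [Module.End.isFinitelySemisimple_iff_isSemisimple]
      have hs : Squarefree (Polynomial.X ^ 2 - 1 : Polynomial ℂ) :=
        (Polynomial.X_pow_sub_one_separable_iff.2 (by norm_num)).squarefree
      refine Module.End.isSemisimple_of_squarefree_aeval_eq_zero hs ?_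
      ext x
      simp only [map_sub, map_mul, Polynomial.aeval_X, map_one, pow_two, LinearMap.sub_apply,
        Module.End.mul_apply, Module.End.one_apply, LinearMap.zero_apply, Submodule.coe_sub, hf]
      rw [← Module.End.mul_apply, ← map_mul, hgg]
      simp
    have htop := Module.End.iSup_iInf_maxGenEigenspace_eq_top_of_iSup_maxGenEigenspace_eq_top_of_commute
      f (fun g h _ => by
        ext x
        simp only [Module.End.mul_apply, hf]
        rw [← Module.End.mul_apply, ← map_mul, hcomm, map_mul, Module.End.mul_apply])
      (fun g => Module.End.iSup_maxGenEigenspace_eq_top (f g))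
    simp only [fun g μ => (hss g).maxGenEigenspace_eq_eigenspace μ] at htop
    have hle : ∀ χ : N → ℂ, (⨅ g, (f g).eigenspace (χ g)) ≤
        (⨅ g : N, Module.End.eigenspace (ρ g) 1).comap L.subtype := by
      intro χ v hv
      simp only [Submodule.mem_iInf, Module.End.mem_eigenspace_iff] at hv
      have hv' : ∀ g, ρ g (v : U) = χ g • (v : U) := fun g => by
        rw [← hf, hv]; rfl
      by_cases hv0 : (v : U) = 0
      · simp [Submodule.mem_comap, hv0]
      let c : N →* ℂ :=
        { toFun := χ
          map_one' := by
            have := hv' 1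
            rw [map_one, Module.End.one_apply] at this
            exact smul_left_injective ℂ hv0 (by simpa using this.symm)
          map_mul' := fun g h => by
            have := hv' (g * h)
            rw [map_mul, Module.End.mul_apply, hv', map_smul, hv', smul_smul] at this
            exact smul_left_injective ℂ hv0 (by simpa [mul_comm] using this.symm) }
      by_cases hc : c.toHomUnits = 1
      · simp only [Submodule.mem_comap, Submodule.mem_iInf, Module.End.mem_eigenspace_iff]
        intro g
        have h1 : χ g = 1 := by
          have := congrArg (fun m : N →* ℂˣ => ((m g : ℂˣ) : ℂ)) hc
          simp only [MonoidHom.coe_toHomUnits, MonoidHom.one_apply, Units.val_one] at this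
          exact this
        rw [← h1]
        exact hv' g
      · exfalso
        apply hv0
        refine eigen_orthogonal_eq_zero hN2 ρ B hBnd hBinv c v hv' (fun x hx => ?_)
        have h1 := heig _ hc
        rw [finrank_le_one_iff] at h1
        obtain ⟨e, he⟩ := h1
        have hmem : ∀ y : U, (∀ g, ρ g y = c g • y) →
            y ∈ ⨅ g : N, Module.End.eigenspace (ρ g) (c.toHomUnits g : ℂ) := fun y hy => by
          simp only [Submodule.mem_iInf, Module.End.mem_eigenspace_iff]
          exact hy
        obtain ⟨a, ha⟩ := he ⟨v, hmem v hv'⟩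
        obtain ⟨b, hb⟩ := he ⟨x, hmem x hx⟩
        have ha' : a • (e : U) = v := congrArg Subtype.val ha
        have hb' : b • (e : U) = x := congrArg Subtype.val hb
        have ha0 : a ≠ 0 := by
          rintro rfl
          exact hv0 (by rw [← ha', zero_smul])
        have hvv := hLiso v v.2 v v.2
        rw [← ha'] at hvv
        simp only [map_smul, LinearMap.smul_apply, smul_eq_mul, mul_eq_zero, ha0, false_or] at hvv
        rw [← ha', ← hb']
        simp [hvv]
    have hall := iSup_le hle
    rw [htop] at hall
    intro v hv
    exact hall (x := ⟨v, hv⟩) trivial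
  by_contra hcon
  have heq := Submodule.eq_of_le_of_finrank_le hL1 (by omega)
  have hbot : L = ⊥ := by
    rw [Submodule.eq_bot_iff]
    intro v hv
    have hmem : ∀ y : U, y ∈ L ↔ ∀ g, ρ g y = (1 : N →* ℂ) g • y := fun y => by
      rw [heq]
      simp only [Submodule.mem_iInf, Module.End.mem_eigenspace_iff, MonoidHom.one_apply]
    exact eigen_orthogonal_eq_zero hN2 ρ B hBnd hBinv 1 v ((hmem v).1 hv)
      (fun x hx => hLiso v hv x ((hmem x).2 hx))
  apply hcon
  rw [hbot]
  simp
end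

section
/- Let U be an irreducible complex representation of SL(2, F_8) of dimension 9, equipped with a nondegenerate SL(2, F_8)-invariant symmetric bilinear form B, and let N be the subgroup of unipotent upper-triangular matrices with rows (1, a) and (0, 1) for a ∈ F_8. Then every N-invariant subspace L of U on which B vanishes identically has dimension at most 1. In particular, there is no 4-dimensional totally isotropic N-invariant subspace of U. -/
open Matrix

namespace IsoAux

variable {F : Type*} [Field F]

/-- upper unipotent -/
def u (a : F) : SpecialLinearGroup (Fin 2) F := ⟨!![1, a; 0, 1], by simp [Matrix.det_fin_two]⟩

/-- lower unipotent -/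
def l (a : F) : SpecialLinearGroup (Fin 2) F := ⟨!![1, 0; a, 1], by simp [Matrix.det_fin_two]⟩

/-- Weyl element -/
def w : SpecialLinearGroup (Fin 2) F := ⟨!![0, -1; 1, 0], by simp [Matrix.det_fin_two]⟩

/-- torus -/
def t (c : F) (hc : c ≠ 0) : SpecialLinearGroup (Fin 2) F :=
  ⟨!![c, 0; 0, c⁻¹], by simp [Matrix.det_fin_two, hc]⟩

lemma coe_u (a : F) : (u a : Matrix (Fin 2) (Fin 2) F) = !![1, a; 0, 1] := rfl
lemma coe_l (a : F) : (l a : Matrix (Fin 2) (Fin 2) F) = !![1, 0; a, 1] := rfl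
lemma coe_w : ((w : SpecialLinearGroup (Fin 2) F) : Matrix (Fin 2) (Fin 2) F) =
    !![0, -1; 1, 0] := rfl
lemma coe_t (c : F) (hc : c ≠ 0) :
    (t c hc : Matrix (Fin 2) (Fin 2) F) = !![c, 0; 0, c⁻¹] := rfl

lemma u_add (a b : F) : u a * u b = u (a + b) := by
  ext i j
  fin_cases i <;> fin_cases j <;> simp [coe_u, Matrix.mul_apply, Fin.sum_univ_two, add_comm]

lemma u_zero : u (0 : F) = 1 := by
  ext i j
  fin_cases i <;> fin_cases j <;> simp [coe_u]

lemma w_u (a : F) : l a * w = w * u (-a) := by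
  ext i j
  fin_cases i <;> fin_cases j <;> simp [coe_u, coe_l, coe_w, Matrix.mul_apply, Fin.sum_univ_two]

lemma t_u (c : F) (hc : c ≠ 0) (a : F) : u (c * c * a) * t c hc = t c hc * u a := by
  ext i j
  fin_cases i <;> fin_cases j <;> simp [coe_u, coe_t, Matrix.mul_apply, Fin.sum_univ_two]
  field_simp

lemma decomp (g : SpecialLinearGroup (Fin 2) F) (hc : g 1 0 ≠ 0) :
    g = u ((g 0 0 - 1) / g 1 0) * l (g 1 0) * u ((g 1 1 - 1) / g 1 0) := by
  have hd : g 0 0 * g 1 1 - g 0 1 * g 1 0 = 1 := by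
    have := g.det_coe
    rwa [Matrix.det_fin_two] at this
  ext i j
  fin_cases i <;> fin_cases j <;>
    simp [coe_u, coe_l, Matrix.mul_apply, Fin.sum_univ_two] <;> field_simp <;> grind

lemma top_of_u (K : Subgroup (SpecialLinearGroup (Fin 2) F)) [K.Normal] (h : ∀ a, u a ∈ K)
    (g : SpecialLinearGroup (Fin 2) F) : g ∈ K := by
  have hl : ∀ a, l a ∈ K := by
    intro a
    have := (inferInstance : K.Normal).conj_mem _ (h (-a)) w
    rwa [← w_u, mul_inv_cancel_right] at this
  have key : ∀ g : SpecialLinearGroup (Fin 2) F, g 1 0 ≠ 0 → g ∈ K := by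
    intro g hg
    rw [decomp g hg]
    exact K.mul_mem (K.mul_mem (h _) (hl _)) (h _)
  by_cases hg : g 1 0 = 0
  · have hd : g 0 0 * g 1 1 - g 0 1 * g 1 0 = 1 := by
      have := g.det_coe
      rwa [Matrix.det_fin_two] at this
    rw [← K.mul_mem_cancel_right (hl 1)]
    apply key
    have : ((g * l 1 : SpecialLinearGroup (Fin 2) F) : Matrix (Fin 2) (Fin 2) F) 1 0 = g 1 0 + g 1 1 := by
      simp [coe_l, Matrix.mul_apply, Fin.sum_univ_two]
    rw [this, hg, zero_add]
    intro h0
    simp [hg, h0] at hd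
  · exact key g hg

variable {V : Type*} [AddCommGroup V] [Module ℂ V] [FiniteDimensional ℂ V]

section weight

variable (ρ : Representation ℂ (SpecialLinearGroup (Fin 2) F) V) (ψ : AddChar F ℂ)

/-- weight space -/
def W (b : F) : Submodule ℂ V where
  carrier := {v | ∀ a, ρ (u a) v = ψ (b * a) • v}
  add_mem' := by
    intro x y hx hy a
    rw [map_add, hx a, hy a, smul_add]
  zero_mem' := by intro a; simp
  smul_mem' := by
    intro c x hx a
    rw [map_smul, hx a, smul_comm]

lemma mem_W {b : F} {v : V} : v ∈ W ρ ψ b ↔ ∀ a, ρ (u a) v = ψ (b * a) • v := Iff.rfl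

variable [Fintype F]

/-- projection to the weight space -/
noncomputable def P (b : F) : V →ₗ[ℂ] V :=
  (Fintype.card F : ℂ)⁻¹ • ∑ a, ψ (b * a) • ρ (u a)

lemma P_apply (b : F) (v : V) :
    P ρ ψ b v = (Fintype.card F : ℂ)⁻¹ • ∑ a, ψ (b * a) • ρ (u a) v := by
  simp [P, LinearMap.sum_apply]

lemma card_ne : (Fintype.card F : ℂ) ≠ 0 := by
  exact_mod_cast Fintype.card_ne_zero

lemma sum_P (hψ : ψ.IsPrimitive) : ∑ b, P ρ ψ b = LinearMap.id := by
  classical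
  simp only [P]
  rw [← Finset.smul_sum, Finset.sum_comm]
  simp only [← Finset.sum_smul, AddChar.sum_mulShift _ hψ]
  simp only [ite_smul, Nat.cast_ite, Nat.cast_zero, zero_smul, Finset.sum_ite_eq',
    Finset.mem_univ, if_true, u_zero, map_one]
  rw [smul_smul, inv_mul_cancel₀ card_ne, one_smul]
  rfl

variable [CharP F 2]

lemma psi_sq (a : F) : ψ a * ψ a = 1 := by
  rw [← AddChar.map_add_eq_mul, CharTwo.add_self_eq_zero, AddChar.map_zero_eq_one]

lemma P_mem (b : F) (v : V) : P ρ ψ b v ∈ W ρ ψ b := by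
  rw [mem_W]
  intro a
  rw [P_apply, map_smul, smul_comm]
  congr 1
  rw [map_sum, Finset.smul_sum]
  refine Fintype.sum_equiv (Equiv.addLeft a) _ _ ?_
  intro c
  simp only [Equiv.coe_addLeft]
  rw [map_smul, ← u_add, map_mul ρ, Module.End.mul_apply, mul_add,
    AddChar.map_add_eq_mul, smul_smul, ← mul_assoc, psi_sq, one_mul]

lemma P_of_mem {b : F} {v : V} (h : v ∈ W ρ ψ b) : P ρ ψ b v = v := by
  rw [P_apply]
  have : ∀ a, ψ (b * a) • ρ (u a) v = v := by
    intro a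
    rw [h a, smul_smul, psi_sq, one_smul]
  simp only [this]
  rw [Finset.sum_const, Finset.card_univ, ← Nat.cast_smul_eq_nsmul ℂ, smul_smul,
    inv_mul_cancel₀ card_ne, one_smul]

lemma P_isProj (b : F) : LinearMap.IsProj (W ρ ψ b) (P ρ ψ b) :=
  ⟨P_mem ρ ψ b, fun _ h => P_of_mem ρ ψ h⟩

lemma sum_finrank (hψ : ψ.IsPrimitive) :
    ∑ b, Module.finrank ℂ (W ρ ψ b) = Module.finrank ℂ V := by
  have h := congrArg (LinearMap.trace ℂ V) (sum_P ρ ψ hψ)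
  rw [map_sum, LinearMap.trace_id] at h
  simp only [fun b => LinearMap.IsProj.trace (P_isProj ρ ψ b)] at h
  exact_mod_cast h

lemma finrank_le (b b' : F) (hb : b ≠ 0) (hb' : b' ≠ 0) :
    Module.finrank ℂ (W ρ ψ b) ≤ Module.finrank ℂ (W ρ ψ b') := by
  obtain ⟨c, hc⟩ := FiniteField.isSquare_of_char_two (ringChar.eq F 2) (b / b')
  have hc0 : c ≠ 0 := by
    rintro rfl
    rw [mul_zero, div_eq_zero_iff] at hc
    tauto
  have hmap : (W ρ ψ b).map (ρ (t c hc0)) ≤ W ρ ψ b' := by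
    rintro _ ⟨v, hv, rfl⟩
    rw [mem_W]
    intro a
    have e : a = c * c * (a / (c * c)) := by field_simp
    rw [← Module.End.mul_apply, ← map_mul]
    conv_lhs => rw [e]
    rw [t_u, map_mul, Module.End.mul_apply, hv, map_smul]
    congr 2
    rw [← hc]
    field_simp
  have hinj : Function.Injective (ρ (t c hc0)) := by
    apply Function.LeftInverse.injective (g := ρ (t c hc0)⁻¹)
    intro x
    simp
  calc _ = Module.finrank ℂ ((W ρ ψ b).map (ρ (t c hc0))) :=
        (Submodule.equivMapOfInjective _ hinj _).finrank_eq
    _ ≤ _ := Submodule.finrank_mono hmap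

lemma B_P (B : LinearMap.BilinForm ℂ V) (hB : ∀ g v w, B (ρ g v) (ρ g w) = B v w)
    {b : F} {x : V} (hx : x ∈ W ρ ψ b) (y : V) : B x (P ρ ψ b y) = B x y := by
  rw [P_apply, map_smul, map_sum]
  have : ∀ a, B x (ψ (b * a) • ρ (u a) y) = B x y := by
    intro a
    rw [← hB (u a) x y, hx a, map_smul, map_smul]
    rfl
  simp only [this]
  rw [Finset.sum_const, Finset.card_univ, ← Nat.cast_smul_eq_nsmul ℂ, smul_smul,
    inv_mul_cancel₀ card_ne, one_smul]

lemma main (hF : Fintype.card F = 8) (hψ : ψ.IsPrimitive) (hdim : Module.finrank ℂ V = 9)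
    (hnt : ¬ ∀ g, ρ g = 1)
    (B : LinearMap.BilinForm ℂ V) (hB : ∀ g v w, B (ρ g v) (ρ g w) = B v w)
    (hnd : ∀ v, (∀ w, B v w = 0) → v = 0)
    (L : Submodule ℂ V) (hL : ∀ a, ∀ v ∈ L, ρ (u a) v ∈ L)
    (hiso : ∀ v ∈ L, ∀ w ∈ L, B v w = 0) : Module.finrank ℂ L ≤ 1 := by
  classical
  have hsum : ∀ v, ∑ b, P ρ ψ b v = v := by
    intro v
    rw [← LinearMap.sum_apply, sum_P ρ ψ hψ, LinearMap.id_apply]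
  have hPL : ∀ b, ∀ v ∈ L, P ρ ψ b v ∈ L := by
    intro b v hv
    rw [P_apply]
    exact L.smul_mem _ (L.sum_mem fun a _ => L.smul_mem _ (hL a v hv))
  have hm : ∀ b, b ≠ 0 → Module.finrank ℂ (W ρ ψ b) = Module.finrank ℂ (W ρ ψ 1) :=
    fun b hb => le_antisymm (finrank_le ρ ψ b 1 hb one_ne_zero)
      (finrank_le ρ ψ 1 b one_ne_zero hb)
  have h9 : Module.finrank ℂ (W ρ ψ 0) + 7 * Module.finrank ℂ (W ρ ψ 1) = 9 := by
    rw [← hdim, ← sum_finrank ρ ψ hψ, ← Finset.add_sum_erase _ _ (Finset.mem_univ (0 : F))]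
    congr 1
    rw [Finset.sum_congr rfl (fun b hb => hm b (Finset.ne_of_mem_erase hb)), Finset.sum_const,
      Finset.card_erase_of_mem (Finset.mem_univ _), Finset.card_univ, hF]
    rfl
  have hm0 : Module.finrank ℂ (W ρ ψ 1) ≠ 0 := by
    intro h0
    apply hnt
    have hbot : ∀ b, b ≠ 0 → ∀ v, P ρ ψ b v = 0 := by
      intro b hb v
      have h1 := hm b hb
      rw [h0, Submodule.finrank_eq_zero] at h1
      have := P_mem ρ ψ b v
      rwa [h1, Submodule.mem_bot] at this
    have hu : ∀ a, u a ∈ ρ.ker := by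
      intro a
      rw [MonoidHom.mem_ker]
      ext v
      have h1 := hsum v
      rw [Fintype.sum_eq_single 0 (fun b hb => hbot b hb v)] at h1
      have h2 := P_mem ρ ψ 0 v a
      rw [h1] at h2
      simpa using h2
    intro g
    exact MonoidHom.mem_ker.1 (top_of_u _ hu g)
  have hm1 : Module.finrank ℂ (W ρ ψ 1) = 1 := by omega
  have hW0 : Module.finrank ℂ (W ρ ψ 0) = 2 := by omega
  have hLP : ∀ v ∈ L, ∀ b, b ≠ 0 → P ρ ψ b v = 0 := by
    intro v hv b hb
    by_contra hx
    apply hx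
    apply hnd
    intro y
    have h1 := hm b hb
    rw [hm1] at h1
    obtain ⟨k, hk⟩ := (finrank_eq_one_iff_of_nonzero' (⟨P ρ ψ b v, P_mem ρ ψ b v⟩ : W ρ ψ b)
      (by simpa [Subtype.ext_iff] using hx)).1 h1 ⟨P ρ ψ b y, P_mem ρ ψ b y⟩
    have hk' : k • P ρ ψ b v = P ρ ψ b y := congrArg Subtype.val hk
    rw [← B_P ρ ψ B hB (P_mem ρ ψ b v) y, ← hk', map_smul,
      hiso _ (hPL b v hv) _ (hPL b v hv), smul_zero]
  have hLW : L ≤ W ρ ψ 0 := by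
    intro v hv
    have h1 := hsum v
    rw [Fintype.sum_eq_single 0 (fun b hb => hLP v hv b hb)] at h1
    rw [← h1]
    exact P_mem ρ ψ 0 v
  by_contra hcon
  have hEq : L = W ρ ψ 0 := Submodule.eq_of_le_of_finrank_le hLW (by omega)
  have hLbot : L = ⊥ := by
    rw [eq_bot_iff]
    intro x hx
    rw [Submodule.mem_bot]
    apply hnd
    intro y
    rw [← B_P ρ ψ B hB (hLW hx) y]
    exact hiso _ hx _ (hEq ▸ P_mem ρ ψ 0 y)
  rw [hLbot, finrank_bot] at hcon
  omega

end weight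

end IsoAux


/-- Let U be an irreducible 9-dimensional complex representation of SL(2, F_8) with a
nondegenerate invariant symmetric bilinear form B, and N the subgroup of unipotent
upper-triangular matrices. Then every N-invariant totally isotropic subspace of U has
dimension at most 1; in particular there is no 4-dimensional totally isotropic
N-invariant subspace. -/
theorem no_large_isotropic_unipotent_invariant_subspace
    (U : FDRep ℂ (Matrix.SpecialLinearGroup (Fin 2) (GaloisField 2 3)))
    [CategoryTheory.Simple U]
    (hdim : Module.finrank ℂ U = 9)
    (B : LinearMap.BilinForm ℂ U)
    (hBsymm : ∀ v w : U, B v w = B w v)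
    (hBnd : ∀ v : U, (∀ w : U, B v w = 0) → v = 0)
    (hBinv : ∀ (g : Matrix.SpecialLinearGroup (Fin 2) (GaloisField 2 3)) (v w : U),
      B (U.ρ g v) (U.ρ g w) = B v w)
    (N : Subgroup (Matrix.SpecialLinearGroup (Fin 2) (GaloisField 2 3)))
    (hN : ∀ g : Matrix.SpecialLinearGroup (Fin 2) (GaloisField 2 3),
      g ∈ N ↔ ∃ a : GaloisField 2 3,
        (g : Matrix (Fin 2) (Fin 2) (GaloisField 2 3)) = !![1, a; 0, 1]) :
    (∀ L : Submodule ℂ U,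
      (∀ n ∈ N, ∀ v ∈ L, U.ρ n v ∈ L) →
      (∀ v ∈ L, ∀ w ∈ L, B v w = 0) →
      Module.finrank ℂ L ≤ 1) ∧
    ¬ ∃ L : Submodule ℂ U,
        Module.finrank ℂ L = 4 ∧
        (∀ n ∈ N, ∀ v ∈ L, U.ρ n v ∈ L) ∧
        (∀ v ∈ L, ∀ w ∈ L, B v w = 0) := by
  have main : ∀ L : Submodule ℂ U,
      (∀ n ∈ N, ∀ v ∈ L, U.ρ n v ∈ L) →
      (∀ v ∈ L, ∀ w ∈ L, B v w = 0) →
      Module.finrank ℂ L ≤ 1 := by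
    classical
    letI : Fintype (GaloisField 2 3) := Fintype.ofFinite _
    have hF : Fintype.card (GaloisField 2 3) = 8 := by
      rw [← Nat.card_eq_fintype_card, GaloisField.card 2 3 (by norm_num)]
      norm_num
    obtain ⟨ψ, hψ⟩ := (AddChar.exists_apply_ne_zero (a := (1 : GaloisField 2 3))).2 one_ne_zero
    have hψ' : ψ.IsPrimitive := AddChar.IsPrimitive.of_ne_one (by
      rintro rfl
      simp at hψ)
    have hnt : ¬ ∀ g, U.ρ g = 1 := by
      intro h
      have h1 := (FDRep.simple_iff_char_is_norm_one U).1 inferInstance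
      have hc : ∀ g, U.character g = 9 := by
        intro g
        rw [FDRep.character, h g, LinearMap.trace_one, hdim]
        norm_num
      simp only [hc, Finset.sum_const, Finset.card_univ, ← Nat.card_eq_fintype_card] at h1
      have hpos : (Nat.card (Matrix.SpecialLinearGroup (Fin 2) (GaloisField 2 3)) : ℂ) ≠ 0 := by
        exact_mod_cast Nat.card_pos.ne'
      rw [nsmul_eq_mul] at h1
      have h2 := mul_left_cancel₀ hpos (h1.trans (mul_one _).symm)
      norm_num at h2
    intro L hL hiso
    exact IsoAux.main U.ρ ψ hF hψ' hdim hnt B hBinv hBnd L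
      (fun a v hv => hL _ ((hN _).2 ⟨a, rfl⟩) v hv) hiso
  refine ⟨main, ?_⟩
  rintro ⟨L, h4, hL, hiso⟩
  have := main L hL hiso
  omega
end

section
/- Let U be an irreducible complex representation of SL(2, F_8) of dimension 9. Then there exists a nondegenerate SL(2, F_8)-invariant symmetric bilinear form on U, and any two nonzero invariant bilinear forms on U are proportional (the invariant form is unique up to a scalar). -/
/-- In characteristic two, every element of `SL(2, F)`, `F` finite, is conjugate to its inverse. -/
theorem sl2_char_two_real {F : Type*} [Field F] [Finite F] [CharP F 2]
    (g : Matrix.SpecialLinearGroup (Fin 2) F) :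
    ∃ h : Matrix.SpecialLinearGroup (Fin 2) F, h * g * h⁻¹ = g⁻¹ := by
  obtain ⟨M, hM⟩ := g
  have two : (2 : F) = 0 := CharTwo.two_eq_zero
  have key : ∃ x y z : F, x * x + y * z = 1 ∧
      x * (M 0 0 + M 1 1) + y * M 1 0 + z * M 0 1 = 0 := by
    by_cases hb : M 0 1 = 0
    · by_cases hc : M 1 0 = 0
      · exact ⟨0, 1, 1, by simp, by simp [hb, hc]⟩
      · refine ⟨1, (M 0 0 + M 1 1) / M 1 0, 0, by simp, ?_⟩
        field_simp
        linear_combination (M 0 0 + M 1 1) * two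
    · by_cases hc : M 1 0 = 0
      · refine ⟨1, 0, (M 0 0 + M 1 1) / M 0 1, by simp, ?_⟩
        field_simp
        linear_combination (M 0 0 + M 1 1) * two
      · obtain ⟨t, ht⟩ := FiniteField.isSquare_of_char_two (ringChar.eq F 2)
          (M 0 1 * M 1 0)⁻¹
        refine ⟨0, t * M 0 1, t * M 1 0, ?_, ?_⟩
        · have : (M 0 1 * M 1 0)⁻¹ * (M 0 1 * M 1 0) = 1 :=
            inv_mul_cancel₀ (mul_ne_zero hb hc)
          rw [ht] at this
          linear_combination this
        · linear_combination (t * M 0 1 * M 1 0) * two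
  obtain ⟨x, y, z, h1, h2⟩ := key
  refine ⟨⟨!![x, y; z, x], ?_⟩, ?_⟩
  · rw [Matrix.det_fin_two_of]
    linear_combination h1 - y * z * two
  · refine mul_inv_eq_iff_eq_mul.2 ?_
    apply Subtype.ext
    change !![x, y; z, x] * M = Matrix.adjugate M * !![x, y; z, x]
    rw [Matrix.adjugate_fin_two]
    ext i j
    fin_cases i <;> fin_cases j <;> simp [Matrix.mul_apply, Fin.sum_univ_two]
    · linear_combination h2 - x * M 1 1 * two
    · linear_combination x * M 0 1 * two
    · linear_combination x * M 1 0 * two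
    · linear_combination h2 - x * M 0 0 * two

/-- A simple representation of a finite group all of whose elements are real, is self-dual. -/
theorem self_dual_of_real {G : Type} [Group G] [Finite G]
    (hG : ∀ g : G, ∃ h : G, h * g * h⁻¹ = g⁻¹)
    (U : FDRep ℂ G) [CategoryTheory.Simple U] :
    Nonempty (U ≅ FDRep.of (Representation.dual U.ρ)) := by
  classical
  have := Fintype.ofFinite G
  have := invertibleOfNonzero (NeZero.ne (Nat.card G : ℂ))
  have hinv : ∀ g, U.character g⁻¹ = U.character g := by
    intro g
    obtain ⟨h, hh⟩ := hG g
    rw [← hh, FDRep.char_conj]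
  have hU := (FDRep.simple_iff_char_is_norm_one U).1 inferInstance
  have hD : CategoryTheory.Simple (FDRep.of (Representation.dual U.ρ)) := by
    rw [FDRep.simple_iff_char_is_norm_one, ← hU]
    refine Finset.sum_congr rfl fun g _ => ?_
    rw [FDRep.char_dual, FDRep.char_dual, inv_inv, mul_comm]
  by_contra hne
  have h := FDRep.char_orthonormal U (FDRep.of (Representation.dual U.ρ))
  rw [if_neg hne] at h
  have h2 : ∑ g : G, U.character g * (FDRep.of (Representation.dual U.ρ)).character g⁻¹
      = Nat.card G := by
    rw [← hU]
    refine Finset.sum_congr rfl fun g _ => ?_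
    rw [FDRep.char_dual, inv_inv, hinv]
  rw [h2, inv_mul_cancel_of_invertible] at h
  exact one_ne_zero h

/-- Schur's lemma, in terms of linear maps. -/
theorem schur_scalar {G : Type} [Group G]
    (U : FDRep ℂ G) [CategoryTheory.Simple U] [Nontrivial U] (T : U →ₗ[ℂ] U)
    (hT : ∀ g v, T (U.ρ g v) = U.ρ g (T v)) : ∃ c : ℂ, T = c • LinearMap.id := by
  have h1 : Module.finrank ℂ (Representation.linHom U.ρ U.ρ).invariants = 1 := by
    rw [(Representation.linHom.invariantsEquivFDRepHom U U).finrank_eq]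
    exact CategoryTheory.finrank_endomorphism_simple_eq_one ℂ U
  have hm : ∀ T : U →ₗ[ℂ] U, (∀ g v, T (U.ρ g v) = U.ρ g (T v)) →
      T ∈ (Representation.linHom U.ρ U.ρ).invariants := by
    intro T hT g
    ext v
    simp only [Representation.linHom_apply, LinearMap.comp_apply]
    rw [← hT, ← Module.End.mul_apply (U.ρ g), ← map_mul]
    simp
  have hid : (⟨LinearMap.id, hm _ fun _ _ => rfl⟩ :
      (Representation.linHom U.ρ U.ρ).invariants) ≠ 0 := by
    intro h
    have h' := congrArg Subtype.val h
    obtain ⟨v, hv⟩ := exists_ne (0 : U)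
    exact hv (LinearMap.congr_fun h' v)
  obtain ⟨c, hc⟩ := (finrank_eq_one_iff_of_nonzero' _ hid).1 h1 ⟨T, hm T hT⟩
  exact ⟨c, (congrArg Subtype.val hc).symm⟩

/-- An irreducible 9-dimensional complex representation U of SL(2, F_8) carries a
nondegenerate invariant symmetric bilinear form, unique up to a scalar. -/
theorem exists_unique_invariant_form_sl2_f8_dim9
    (U : FDRep ℂ (Matrix.SpecialLinearGroup (Fin 2) (GaloisField 2 3)))
    [CategoryTheory.Simple U]
    (hdim : Module.finrank ℂ U = 9) :
    (∃ B : LinearMap.BilinForm ℂ U,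
      (∀ (g : Matrix.SpecialLinearGroup (Fin 2) (GaloisField 2 3)) (v w : U),
        B (U.ρ g v) (U.ρ g w) = B v w) ∧
      (∀ v w : U, B v w = B w v) ∧
      (∀ v : U, (∀ w : U, B v w = 0) → v = 0)) ∧
    (∀ B₁ B₂ : LinearMap.BilinForm ℂ U,
      (∀ (g : Matrix.SpecialLinearGroup (Fin 2) (GaloisField 2 3)) (v w : U),
        B₁ (U.ρ g v) (U.ρ g w) = B₁ v w) →
      (∀ (g : Matrix.SpecialLinearGroup (Fin 2) (GaloisField 2 3)) (v w : U),
        B₂ (U.ρ g v) (U.ρ g w) = B₂ v w) →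
      B₁ ≠ 0 → B₂ ≠ 0 → ∃ c : ℂ, B₂ = c • B₁) := by
  have : Nontrivial U := Module.nontrivial_of_finrank_pos (R := ℂ) (by omega)
  have : Finite (GaloisField 2 3) := inferInstance
  obtain ⟨i⟩ := self_dual_of_real sl2_char_two_real U
  let L : U ≃ₗ[ℂ] Module.Dual ℂ U := FDRep.isoToLinearEquiv i
  have hL0 : ∀ g v, L (U.ρ g v) = Representation.dual U.ρ g (L v) := by
    intro g v
    have h := FDRep.Iso.conj_ρ i g
    rw [FDRep.of_ρ'] at h
    have h' := LinearMap.congr_fun h (L v)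
    rw [LinearEquiv.conj_apply_apply] at h'
    rw [h']
    exact congrArg (fun x => L (U.ρ g x)) (L.symm_apply_apply v).symm
  let B : LinearMap.BilinForm ℂ U := L.toLinearMap
  have hB : ∀ g v w, B (U.ρ g v) (U.ρ g w) = B v w := by
    intro g v w
    change L (U.ρ g v) (U.ρ g w) = L v w
    rw [hL0, Representation.dual_apply, Module.Dual.transpose_apply]
    change L v (U.ρ g⁻¹ (U.ρ g w)) = L v w
    rw [← Module.End.mul_apply, ← map_mul]
    simp
  have huniq : ∀ B' : LinearMap.BilinForm ℂ U,
      (∀ g v w, B' (U.ρ g v) (U.ρ g w) = B' v w) → ∃ c : ℂ, B' = c • B := by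
    intro B' hB'
    obtain ⟨c, hc⟩ := schur_scalar U (L.symm.toLinearMap ∘ₗ B') (by
      intro g v
      change L.symm (B' (U.ρ g v)) = U.ρ g (L.symm (B' v))
      rw [LinearEquiv.symm_apply_eq, hL0, LinearEquiv.apply_symm_apply]
      ext w
      rw [Representation.dual_apply, Module.Dual.transpose_apply]
      change B' (U.ρ g v) w = B' v (U.ρ g⁻¹ w)
      rw [← hB' g v, ← Module.End.mul_apply, ← map_mul]
      simp)
    refine ⟨c, ?_⟩
    refine LinearMap.ext fun v => ?_
    have h := LinearMap.congr_fun hc v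
    change L.symm (B' v) = c • v at h
    rw [LinearEquiv.symm_apply_eq, map_smul] at h
    exact h
  have hnd : ∀ v : U, (∀ w : U, B v w = 0) → v = 0 := by
    intro v hv
    have : L v = 0 := LinearMap.ext hv
    exact (LinearEquiv.map_eq_zero_iff L).1 this
  have hB0 : B ≠ 0 := by
    intro h
    obtain ⟨v, hv⟩ := exists_ne (0 : U)
    exact hv (hnd v fun w => by simp [h])
  refine ⟨⟨B, hB, ?_, hnd⟩, ?_⟩
  · obtain ⟨c, hc⟩ := huniq B.flip (fun g v w => hB g w v)
    have hc' : ∀ v w, B w v = c * B v w := fun v w => LinearMap.congr_fun₂ hc v w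
    have hcc : c * c = 1 := by
      by_contra hne
      apply hB0
      refine LinearMap.ext₂ fun v w => ?_
      have h : (c * c - 1) * B v w = 0 := by
        linear_combination -(hc' w v) - c * (hc' v w)
      exact (mul_eq_zero.1 h).resolve_left (sub_ne_zero.2 hne)
    rcases mul_self_eq_one_iff.1 hcc with h1 | h1
    · intro v w
      rw [hc' w v, h1, one_mul]
    · exfalso
      let b := Module.finBasisOfFinrankEq ℂ U hdim
      have hnd' : B.Nondegenerate := by
        refine ⟨hnd, fun w hw => hnd w fun v => ?_⟩
        rw [hc' v w, hw, mul_zero]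
      have hdet := (LinearMap.BilinForm.nondegenerate_iff_det_ne_zero b).1 hnd'
      apply hdet
      have ht : (LinearMap.BilinForm.toMatrix b B).transpose = -(LinearMap.BilinForm.toMatrix b B) := by
        ext i j
        rw [Matrix.transpose_apply, Matrix.neg_apply, LinearMap.BilinForm.toMatrix_apply,
          LinearMap.BilinForm.toMatrix_apply, hc' (b i) (b j), h1, neg_one_mul]
      have h2 := congrArg Matrix.det ht
      rw [Matrix.det_transpose, Matrix.det_neg, Fintype.card_fin] at h2
      norm_num at h2
      exact self_eq_neg.1 h2
  · intro B₁ B₂ h₁ h₂ hn₁ _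
    obtain ⟨c₁, hc₁⟩ := huniq B₁ h₁
    obtain ⟨c₂, hc₂⟩ := huniq B₂ h₂
    have hc0 : c₁ ≠ 0 := by
      rintro rfl
      exact hn₁ (by rw [hc₁, zero_smul])
    exact ⟨c₂ / c₁, by rw [hc₁, hc₂, smul_smul, div_mul_cancel₀ _ hc0]⟩
end

section
/- The group PSp(4, F_3), the quotient of the symplectic group Sp(4, F_3) by its center, admits a faithful complex linear representation of dimension 5. -/
/-! The proof uses the even part of the Weil representation of `Sp(4, F_3)` on functions on
`F_3 ^ 2`.  The scalars are fixed by the condition `det (T on even functions) ^ 2 = det T`. -/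

namespace WeilRep

open Matrix

abbrev X := Fin 2 → ZMod 3
abbrev V := Fin 2 ⊕ Fin 2 → ZMod 3

abbrev pos (v : V) : X := fun i => v (Sum.inl i)
abbrev mom (v : V) : X := fun i => v (Sum.inr i)

noncomputable abbrev ψ : AddChar (ZMod 3) ℂ := ZMod.stdAddChar

/-- The symplectic form. -/
def form (v u : V) : ZMod 3 := v ⬝ᵥ (Matrix.J (Fin 2) (ZMod 3) *ᵥ u)

lemma form_eq (v u : V) : form v u = pos u ⬝ᵥ mom v - pos v ⬝ᵥ mom u := by
  simp [form, Matrix.J, dotProduct, mulVec, fromBlocks, Fin.sum_univ_two, Matrix.one_apply]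
  ring

lemma form_symp {g : Matrix (Fin 2 ⊕ Fin 2) (Fin 2 ⊕ Fin 2) (ZMod 3)}
    (hg : g ∈ symplecticGroup (Fin 2) (ZMod 3)) (v u : V) :
    form (g *ᵥ v) (g *ᵥ u) = form v u := by
  have h := SymplecticGroup.mem_iff'.1 hg
  unfold form
  conv_rhs => rw [← h]
  rw [← Matrix.vecMul_transpose, ← Matrix.dotProduct_mulVec, Matrix.mulVec_mulVec,
    Matrix.mulVec_mulVec]

/-- The Heisenberg operators. -/
noncomputable def W (v : V) : Matrix X X ℂ := fun x y =>
  if y = x + pos v then ψ (mom v ⬝ᵥ x - pos v ⬝ᵥ mom v) else 0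

lemma W_mul_apply {κ : Type*} (v : V) (A : Matrix X κ ℂ) (x : X) (z : κ) :
    (W v * A) x z = ψ (mom v ⬝ᵥ x - pos v ⬝ᵥ mom v) * A (x + pos v) z := by
  rw [Matrix.mul_apply, Finset.sum_eq_single (x + pos v)]
  · rw [W, if_pos rfl]
  · intro b _ hb
    rw [W, if_neg hb, zero_mul]
  · simp

lemma mul_W_apply {κ : Type*} (v : V) (A : Matrix κ X ℂ) (x : κ) (z : X) :
    (A * W v) x z = A x (z - pos v) * ψ (mom v ⬝ᵥ (z - pos v) - pos v ⬝ᵥ mom v) := by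
  rw [Matrix.mul_apply, Finset.sum_eq_single (z - pos v)]
  · rw [W, if_pos (by abel)]
  · intro b _ hb
    rw [W, if_neg, mul_zero]
    rintro rfl
    simp at hb
  · simp

lemma W_mul (v u : V) : W v * W u = ψ (form v u) • W (v + u) := by
  ext x z
  rw [W_mul_apply, Matrix.smul_apply, smul_eq_mul, W, W]
  have e : x + pos (v + u) = x + pos v + pos u := by
    rw [add_assoc]; rfl
  rw [e]
  split_ifs with h
  · rw [← AddChar.map_add_eq_mul, ← AddChar.map_add_eq_mul, form_eq]
    congr 1
    simp only [dotProduct, Fin.sum_univ_two, Pi.add_apply, pos, mom]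
    generalize v (Sum.inl 0) = a0
    generalize v (Sum.inl 1) = a1
    generalize v (Sum.inr 0) = b0
    generalize v (Sum.inr 1) = b1
    generalize u (Sum.inl 0) = c0
    generalize u (Sum.inl 1) = c1
    generalize u (Sum.inr 0) = d0
    generalize u (Sum.inr 1) = d1
    generalize x 0 = x0
    generalize x 1 = x1
    have h3 : (3 : ZMod 3) = 0 := rfl
    linear_combination (a0 * d0 + a1 * d1) * h3
  · simp

lemma W_zero : W 0 = 1 := by
  ext x y
  have : pos (0 : V) = 0 := rfl
  have h2 : mom (0 : V) = 0 := rfl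
  simp [W, Matrix.one_apply, this, h2, eq_comm]

lemma W_trace (v : V) : (W v).trace = if v = 0 then 9 else 0 := by
  split_ifs with h
  · subst h
    rw [W_zero]
    simp
  · by_cases ha : pos v = 0
    · have hb : mom v ≠ 0 := by
        intro hb
        apply h
        ext i
        rcases i with i | i
        · exact congrFun ha i
        · exact congrFun hb i
      simp only [Matrix.trace, Matrix.diag, W, ha, add_zero, if_true, zero_dotProduct, sub_zero]
      have : ∃ y : X, mom v ⬝ᵥ y ≠ 0 := by
        by_contra! hc
        exact hb (dotProduct_eq_zero _ hc)
      obtain ⟨y, hy⟩ := this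
      have h1 : ∑ x : X, ψ (mom v ⬝ᵥ x) = ψ (mom v ⬝ᵥ y) * ∑ x : X, ψ (mom v ⬝ᵥ x) := by
        rw [Finset.mul_sum]
        symm
        apply Fintype.sum_equiv (Equiv.addLeft y)
        intro x
        simp [dotProduct_add, AddChar.map_add_eq_mul]
      have h2 : ψ (mom v ⬝ᵥ y) ≠ 1 := by
        intro hh
        apply hy
        apply ZMod.injective_stdAddChar
        rw [hh]; simp
      have h3 : (ψ (mom v ⬝ᵥ y) - 1) * ∑ x : X, ψ (mom v ⬝ᵥ x) = 0 := by
        linear_combination -h1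
      rcases mul_eq_zero.1 h3 with h4 | h4
      · exact absurd (sub_eq_zero.1 h4) h2
      · exact h4
    · simp [Matrix.trace, W, ha]

lemma form_self (v : V) : form v v = 0 := by rw [form_eq]; ring
lemma form_neg_right (v u : V) : form v (-u) = - form v u := by
  simp [form, mulVec_neg]
lemma form_neg_left (v u : V) : form (-v) u = - form v u := by
  simp [form]
lemma form_add_left (v u w : V) : form (v + u) w = form v w + form u w := by
  simp [form, add_dotProduct]
lemma form_antisymm (v u : V) : form v u = - form u v := by
  rw [form_eq, form_eq]; ring

lemma W_neg_mul (v : V) : W (-v) * W v = 1 := by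
  rw [W_mul, form_neg_left, form_self]
  simp [W_zero]

lemma W_mul_neg (v : V) : W v * W (-v) = 1 := by
  rw [W_mul, form_neg_right, form_self]
  simp [W_zero]

lemma W_star (v : V) : (W v)ᴴ = W (-v) := by
  ext x y
  have e1 : pos (-v) = - pos v := rfl
  have e2 : mom (-v) = - mom v := rfl
  simp only [conjTranspose_apply, W, e1, e2]
  by_cases h : x = y + pos v
  · subst h
    rw [if_pos rfl, if_pos (by simp)]
    rw [← starRingEnd_apply, ← AddChar.map_neg_eq_conj]
    congr 1
    simp only [dotProduct, Fin.sum_univ_two, Pi.add_apply, Pi.neg_apply]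
    have h3 : (3 : ZMod 3) = 0 := rfl
    linear_combination (mom v 0 * pos v 0 + mom v 1 * pos v 1) * h3
  · rw [if_neg h, if_neg]
    · simp
    · rintro rfl
      simp at h

abbrev M4 := Matrix (Fin 2 ⊕ Fin 2) (Fin 2 ⊕ Fin 2) (ZMod 3)

def Inter (g : M4) (T : Matrix X X ℂ) : Prop := ∀ v, T * W v = W (g *ᵥ v) * T

lemma scalar_of_comm (A : Matrix X X ℂ) (h : ∀ v, A * W v = W v * A) :
    ∃ c : ℂ, A = c • (1 : Matrix X X ℂ) := by
  refine ⟨A 0 0, ?_⟩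
  ext x y
  rw [Matrix.smul_apply, Matrix.one_apply]
  split_ifs with hxy
  · subst hxy
    have := congrFun (congrFun (h (Sum.elim x 0)) 0) x
    rw [W_mul_apply, mul_W_apply] at this
    have e1 : pos (Sum.elim x 0) = x := rfl
    have e2 : mom (Sum.elim x 0) = 0 := rfl
    rw [e1, e2] at this
    simpa using this.symm
  · obtain ⟨i, hi⟩ := Function.ne_iff.1 hxy
    have := congrFun (congrFun (h (Sum.elim 0 (Pi.single i 1))) x) y
    rw [W_mul_apply, mul_W_apply] at this
    have e1 : pos (Sum.elim 0 (Pi.single i 1)) = 0 := rfl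
    have e2 : mom (Sum.elim 0 (Pi.single i 1)) = Pi.single i 1 := rfl
    rw [e1, e2] at this
    rw [sub_zero, add_zero, zero_dotProduct, sub_zero, sub_zero, single_one_dotProduct,
      single_one_dotProduct] at this
    have hne : ψ (y i) ≠ ψ (x i) := fun hh => hi (ZMod.injective_stdAddChar hh).symm
    have h3 : (ψ (y i) - ψ (x i)) * A x y = 0 := by linear_combination this
    rcases mul_eq_zero.1 h3 with h4 | h4
    · exact absurd (sub_eq_zero.1 h4) hne
    · simpa using h4

lemma Inter.mul {g h : M4} {T S : Matrix X X ℂ} (hT : Inter g T) (hS : Inter h S) :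
    Inter (g * h) (T * S) := by
  intro v
  rw [Matrix.mul_assoc, hS, ← Matrix.mul_assoc, hT, Matrix.mul_assoc, Matrix.mulVec_mulVec]

lemma Inter.smul {g : M4} {T : Matrix X X ℂ} (hT : Inter g T) (c : ℂ) :
    Inter g (c • T) := by
  intro v
  rw [Matrix.smul_mul, hT, Matrix.mul_smul]

lemma Inter.unique {g : M4} {T S : Matrix X X ℂ} (hT : Inter g T) (hS : Inter g S)
    (hd : T.det ≠ 0) : ∃ c : ℂ, S = c • T := by
  have hu : IsUnit T.det := isUnit_iff_ne_zero.2 hd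
  obtain ⟨c, hc⟩ := scalar_of_comm (T⁻¹ * S) (by
    intro v
    rw [Matrix.mul_assoc, hS, ← Matrix.mul_assoc, ← Matrix.mul_assoc]
    congr 1
    calc T⁻¹ * W (g *ᵥ v) = T⁻¹ * (W (g *ᵥ v) * T) * T⁻¹ := by
            rw [Matrix.mul_assoc, Matrix.mul_assoc, Matrix.mul_nonsing_inv _ hu, Matrix.mul_one]
      _ = T⁻¹ * (T * W v) * T⁻¹ := by rw [hT]
      _ = W v * T⁻¹ := by rw [← Matrix.mul_assoc, Matrix.nonsing_inv_mul _ hu, Matrix.one_mul])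
  refine ⟨c, ?_⟩
  calc S = T * (T⁻¹ * S) := by
        rw [← Matrix.mul_assoc, Matrix.mul_nonsing_inv _ hu, Matrix.one_mul]
    _ = c • T := by rw [hc, Matrix.mul_smul, Matrix.mul_one]

lemma inter_avg {g : M4} (hg : g ∈ symplecticGroup (Fin 2) (ZMod 3)) (A : Matrix X X ℂ) :
    Inter g (∑ v, W (g *ᵥ v) * A * W (-v)) := by
  intro u
  rw [Finset.sum_mul, Finset.mul_sum]
  symm
  apply Fintype.sum_equiv (Equiv.addLeft u)
  intro v
  simp only [Equiv.coe_addLeft]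
  rw [← Matrix.mul_assoc, ← Matrix.mul_assoc, W_mul, Matrix.mul_assoc _ (W (-(u + v))), W_mul,
    form_symp hg, ← Matrix.mulVec_add]
  have e : -(u + v) + u = -v := by abel
  rw [e, Matrix.smul_mul, Matrix.smul_mul, Matrix.mul_smul]
  congr 2
  rw [form_neg_left, form_add_left, form_self, form_antisymm]
  ring

lemma symp_inj {g : M4} (hg : g ∈ symplecticGroup (Fin 2) (ZMod 3)) (v : V)
    (h : g *ᵥ v = 0) : v = 0 := by
  have hu := SymplecticGroup.symplectic_det hg
  have : g⁻¹ *ᵥ (g *ᵥ v) = 0 := by rw [h, Matrix.mulVec_zero]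
  rwa [Matrix.mulVec_mulVec, Matrix.nonsing_inv_mul _ hu, Matrix.one_mulVec] at this

lemma exists_inter_ne {g : M4} (hg : g ∈ symplecticGroup (Fin 2) (ZMod 3)) :
    ∃ T, Inter g T ∧ T ≠ 0 := by
  by_contra! hc
  have h0 : ∀ x : X, (∑ v, W (g *ᵥ v) * Matrix.single x 0 (1 : ℂ) * W (-v) : Matrix X X ℂ) x 0 = 0 := by
    intro x
    rw [hc _ (inter_avg hg _)]
    rfl
  have h1 : ∀ x : X, ∑ v, W (g *ᵥ v) x x * W (-v) 0 0 = 0 := by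
    intro x
    rw [← h0 x, Matrix.sum_apply]
    apply Finset.sum_congr rfl
    intro v _
    rw [Matrix.mul_apply, Finset.sum_eq_single (0 : X)]
    · simp
    · intro b _ hb
      rw [Matrix.mul_single_apply_of_ne]
      · simp
      · exact hb
    · simp
  have h2 : ∑ x : X, ∑ v, W (g *ᵥ v) x x * W (-v) 0 0 = 0 :=
    Finset.sum_eq_zero fun x _ => h1 x
  rw [Finset.sum_comm] at h2
  have h3 : ∀ v : V, ∑ x : X, W (g *ᵥ v) x x * W (-v) 0 0 = if v = 0 then 9 else 0 := by
    intro v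
    rw [← Finset.sum_mul]
    have := W_trace (g *ᵥ v)
    rw [Matrix.trace] at this
    simp only [Matrix.diag] at this
    rw [this]
    by_cases hv : v = 0
    · subst hv
      simp [W_zero]
    · rw [if_neg hv, if_neg (fun h => hv (symp_inj hg v h)), zero_mul]
  simp only [h3] at h2
  simp at h2

lemma exists_inter_det {g : M4} (hg : g ∈ symplecticGroup (Fin 2) (ZMod 3)) :
    ∃ T, Inter g T ∧ T.det ≠ 0 := by
  obtain ⟨T, hT, hne⟩ := exists_inter_ne hg
  refine ⟨T, hT, ?_⟩
  have hs : ∀ v, W v * Tᴴ = Tᴴ * W (g *ᵥ v) := by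
    intro v
    have := congrArg conjTranspose (hT (-v))
    rwa [conjTranspose_mul, conjTranspose_mul, W_star, W_star, neg_neg, Matrix.mulVec_neg,
      neg_neg] at this
  obtain ⟨c, hc⟩ := scalar_of_comm (Tᴴ * T) (by
    intro v
    rw [Matrix.mul_assoc, hT, ← Matrix.mul_assoc, ← hs, Matrix.mul_assoc])
  have hc0 : c ≠ 0 := by
    rintro rfl
    rw [zero_smul] at hc
    exact hne (by
      open scoped ComplexOrder in
      exact Matrix.conjTranspose_mul_self_eq_zero.1 hc)
  intro hd
  have := congrArg Matrix.det hc
  rw [Matrix.det_mul, hd, mul_zero, Matrix.det_smul, Matrix.det_one, mul_one] at this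
  exact pow_ne_zero _ hc0 this.symm

/-- The parity operator. -/
noncomputable def P : Matrix X X ℂ := fun x y => if y = -x then 1 else 0

lemma P_mul_apply {κ : Type*} (A : Matrix X κ ℂ) (x : X) (z : κ) :
    (P * A) x z = A (-x) z := by
  rw [Matrix.mul_apply, Finset.sum_eq_single (-x)]
  · rw [P, if_pos rfl, one_mul]
  · intro b _ hb
    rw [P, if_neg hb, zero_mul]
  · simp

lemma P_sq : P * P = 1 := by
  ext x y
  rw [P_mul_apply]
  simp [P, Matrix.one_apply, eq_comm]

lemma P_W (v : V) : P * W v = W (-v) * P := by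
  ext x y
  have e1 : pos (-v) = - pos v := rfl
  have e2 : mom (-v) = - mom v := rfl
  rw [P_mul_apply, W_mul_apply, e1, e2, W, P]
  have : -(x + -pos v) = -x + pos v := by abel
  rw [this]
  simp

lemma P_det : P.det = 1 := by
  have : P = ((Equiv.neg X).toPEquiv.toMatrix : Matrix X X ℂ) := by
    ext x y
    simp [P, PEquiv.toMatrix_apply, eq_comm]
  have h2 : P = (Equiv.neg X).permMatrix ℂ := this
  rw [h2, Matrix.det_permutation]
  have : Equiv.Perm.sign (Equiv.neg X) = 1 := by decide +kernel
  rw [this]; simp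

lemma card_X : Fintype.card X = 9 := by simp

lemma Inter.comm_P {g : M4} {T : Matrix X X ℂ} (hT : Inter g T) (hd : T.det ≠ 0) :
    P * T = T * P := by
  have h1 : Inter g (P * T * P) := by
    intro v
    rw [Matrix.mul_assoc, P_W, ← Matrix.mul_assoc, Matrix.mul_assoc P, hT, ← Matrix.mul_assoc P,
      P_W, Matrix.mulVec_neg, neg_neg]
    simp only [Matrix.mul_assoc]
  obtain ⟨c, hc⟩ := hT.unique h1 hd
  have h2 : P * (P * T * P) * P = T := by
    rw [← Matrix.mul_assoc, ← Matrix.mul_assoc, P_sq, Matrix.one_mul, Matrix.mul_assoc, P_sq,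
      Matrix.mul_one]
  have hTne : T ≠ 0 := by
    rintro rfl
    exact hd (by simp [Matrix.det_zero])
  have hcc : c * c = 1 := by
    rw [hc, Matrix.mul_smul, Matrix.smul_mul, hc, smul_smul] at h2
    have h3 : (c * c - 1) • T = 0 := by rw [sub_smul, h2, one_smul, sub_self]
    rcases smul_eq_zero.1 h3 with h | h
    · exact sub_eq_zero.1 h
    · exact absurd h hTne
  have h9 : c ^ 9 = 1 := by
    have := congrArg Matrix.det hc
    rw [Matrix.det_mul, Matrix.det_mul, P_det, Matrix.det_smul, card_X, one_mul, mul_one] at this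
    have h3 : (c ^ 9 - 1) * T.det = 0 := by linear_combination -this
    rcases mul_eq_zero.1 h3 with h | h
    · exact sub_eq_zero.1 h
    · exact absurd h hd
  have hc1 : c = 1 := by
    have : c ^ 9 = (c * c) ^ 4 * c := by ring
    rw [this, hcc, one_pow, one_mul] at h9
    exact h9
  rw [hc1, one_smul] at hc
  calc P * T = P * T * P * P := by rw [Matrix.mul_assoc (P * T), P_sq, Matrix.mul_one]
    _ = T * P := by rw [hc]

/-- Representatives of the orbits of `±1`. -/
def rep : Fin 5 → X := ![![0, 0], ![0, 1], ![1, 0], ![1, 1], ![1, 2]]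

def cls (x : X) : Fin 5 :=
  if x 0 = 0 then (if x 1 = 0 then 0 else 1) else
    if x 1 = 0 then 2 else if x 0 = x 1 then 3 else 4

lemma cls_rep : ∀ i, cls (rep i) = i := by decide
lemma cls_neg : ∀ x, cls (-x) = cls x := by decide
lemma rep_cls : ∀ x, rep (cls x) = x ∨ rep (cls x) = -x := by decide

noncomputable def R : Matrix X (Fin 5) ℂ := fun x i => if i = cls x then 1 else 0
noncomputable def S : Matrix (Fin 5) X ℂ := fun i x => if x = rep i then 1 else 0

lemma S_R : S * R = 1 := by
  ext i j
  rw [Matrix.mul_apply, Finset.sum_eq_single (rep i)]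
  · simp [S, R, cls_rep, Matrix.one_apply, eq_comm]
  · intro b _ hb
    rw [S, if_neg hb, zero_mul]
  · simp

lemma P_R : P * R = R := by
  ext x j
  rw [P_mul_apply, R, R, cls_neg]

lemma R_S (M : Matrix X (Fin 5) ℂ) (h : P * M = M) : R * (S * M) = M := by
  ext x j
  have h1 : ∀ x, M (-x) j = M x j := by
    intro x
    have := congrFun (congrFun h x) j
    rwa [P_mul_apply] at this
  simp only [Matrix.mul_apply, S, R, ite_mul, one_mul, zero_mul, Finset.sum_ite_eq',
    Finset.mem_univ, if_true]
  rcases rep_cls x with h | h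
  · rw [h]
  · rw [h, h1]

/-- The even part of an operator. -/
noncomputable def ev (T : Matrix X X ℂ) : Matrix (Fin 5) (Fin 5) ℂ := S * (T * R)

lemma R_ev {T : Matrix X X ℂ} (h : P * T = T * P) : R * ev T = T * R := by
  apply R_S
  rw [← Matrix.mul_assoc, h, Matrix.mul_assoc, P_R]

lemma ev_mul {T U : Matrix X X ℂ} (h : P * U = U * P) : ev (T * U) = ev T * ev U := by
  rw [ev, Matrix.mul_assoc, ← R_ev h, ev]
  rw [ev, Matrix.mul_assoc, Matrix.mul_assoc]

lemma ev_one : ev 1 = 1 := by rw [ev, Matrix.one_mul, S_R]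

lemma ev_smul (c : ℂ) (T : Matrix X X ℂ) : ev (c • T) = c • ev T := by
  simp [ev]

lemma ev_P : ev P = 1 := by rw [ev, P_R, S_R]

lemma ev_det {T : Matrix X X ℂ} (h : P * T = T * P) (hd : T.det ≠ 0) : (ev T).det ≠ 0 := by
  have hu : IsUnit T.det := isUnit_iff_ne_zero.2 hd
  have h1 : ev T⁻¹ * ev T = 1 := by
    rw [← ev_mul h, Matrix.nonsing_inv_mul _ hu, ev_one]
  intro h0
  have := congrArg Matrix.det h1
  rw [Matrix.det_mul, h0, mul_zero, Matrix.det_one] at this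
  exact zero_ne_one this

structure Normal (g : M4) (T : Matrix X X ℂ) : Prop where
  inter : Inter g T
  det_ne : T.det ≠ 0
  norm : (ev T).det ^ 2 = T.det

lemma Normal.comm {g : M4} {T : Matrix X X ℂ} (h : Normal g T) : P * T = T * P :=
  h.inter.comm_P h.det_ne

lemma exists_normal {g : M4} (hg : g ∈ symplecticGroup (Fin 2) (ZMod 3)) :
    ∃ T, Normal g T := by
  obtain ⟨T, hT, hd⟩ := exists_inter_det hg
  have he := ev_det (hT.comm_P hd) hd
  have hc : T.det / (ev T).det ^ 2 ≠ 0 := div_ne_zero hd (pow_ne_zero _ he)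
  refine ⟨(T.det / (ev T).det ^ 2) • T, hT.smul _, ?_, ?_⟩
  · rw [Matrix.det_smul]
    exact mul_ne_zero (pow_ne_zero _ hc) hd
  · rw [ev_smul, Matrix.det_smul, Matrix.det_smul, card_X, Fintype.card_fin]
    field_simp

lemma Normal.unique {g : M4} {T U : Matrix X X ℂ} (hT : Normal g T) (hU : Normal g U) :
    U = T := by
  obtain ⟨c, rfl⟩ := hT.inter.unique hU.inter hT.det_ne
  have h := hU.norm
  rw [ev_smul, Matrix.det_smul, Matrix.det_smul, card_X, Fintype.card_fin, mul_pow, hT.norm] at h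
  have hc : c ≠ 0 := by
    rintro rfl
    exact hU.det_ne (by simp [Matrix.det_zero])
  have h2 : (c - 1) * (c ^ 9 * T.det) = 0 := by linear_combination h
  rcases mul_eq_zero.1 h2 with h3 | h3
  · rw [sub_eq_zero.1 h3, one_smul]
  · exact absurd h3 (mul_ne_zero (pow_ne_zero _ hc) hT.det_ne)

lemma Normal.mul {g h : M4} {T U : Matrix X X ℂ} (hT : Normal g T) (hU : Normal h U) :
    Normal (g * h) (T * U) where
  inter := hT.inter.mul hU.inter
  det_ne := by rw [Matrix.det_mul]; exact mul_ne_zero hT.det_ne hU.det_ne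
  norm := by rw [ev_mul hU.comm, Matrix.det_mul, Matrix.det_mul, mul_pow, hT.norm, hU.norm]

lemma normal_one : Normal 1 1 where
  inter := by intro v; simp
  det_ne := by simp
  norm := by simp [ev_one]

lemma normal_neg_one : Normal (-1) P where
  inter := by intro v; rw [P_W, Matrix.neg_mulVec, Matrix.one_mulVec]
  det_ne := by simp [P_det]
  norm := by simp [ev_P, P_det]

abbrev Sp := symplecticGroup (Fin 2) (ZMod 3)

noncomputable def op (g : Sp) : Matrix X X ℂ := (exists_normal g.2).choose

lemma op_normal (g : Sp) : Normal g.1 (op g) := (exists_normal g.2).choose_spec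

noncomputable def weil : Sp →* Matrix (Fin 5) (Fin 5) ℂ where
  toFun g := ev (op g)
  map_one' := by
    rw [Normal.unique normal_one (op_normal 1), ev_one]
  map_mul' g h := by
    rw [Normal.unique ((op_normal g).mul (op_normal h)) (op_normal (g * h)),
      ev_mul (op_normal h).comm]

lemma weil_one_of {g : Sp} (h : g.1 = 1 ∨ g.1 = -1) : weil g = 1 := by
  change ev (op g) = 1
  rcases h with h | h
  · have hn := op_normal g
    rw [h] at hn
    rw [Normal.unique normal_one hn, ev_one]
  · have hn := op_normal g
    rw [h] at hn
    rw [Normal.unique normal_neg_one hn, ev_P]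

lemma W_mulVec (v : V) (f : X → ℂ) (x : X) :
    (W v *ᵥ f) x = ψ (mom v ⬝ᵥ x - pos v ⬝ᵥ mom v) * f (x + pos v) := by
  rw [Matrix.mulVec, dotProduct, Finset.sum_eq_single (x + pos v)]
  · rw [W, if_pos rfl]
  · intro b _ hb
    rw [W, if_neg hb, zero_mul]
  · simp

lemma even_fixed {T : Matrix X X ℂ} (hT : T * R = R) (f : X → ℂ) (hf : ∀ x, f (-x) = f x) :
    T *ᵥ f = f := by
  have h : f = R *ᵥ (fun i => f (rep i)) := by
    ext x
    rw [Matrix.mulVec, dotProduct, Finset.sum_eq_single (cls x)]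
    · rw [R, if_pos rfl, one_mul]
      rcases rep_cls x with h | h
      · rw [h]
      · rw [h, hf]
    · intro b _ hb
      rw [R, if_neg hb, zero_mul]
    · simp
  rw [h, Matrix.mulVec_mulVec, hT]

noncomputable def delta (a : X) : X → ℂ := fun x => if x = a then 1 else 0

lemma delta_zero_even (x : X) : delta 0 (-x) = delta 0 x := by
  simp [delta]

lemma W_delta (v : V) (hv : mom v = 0) : W v *ᵥ delta 0 = delta (-pos v) := by
  ext x
  rw [W_mulVec, hv]
  simp [delta, eq_neg_iff_add_eq_zero]

lemma W_even {g : M4} {T : Matrix X X ℂ} (hI : Inter g T) (hT : T * R = R)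
    (f : X → ℂ) (hf : ∀ x, f (-x) = f x) (v : V) :
    T *ᵥ (W v *ᵥ f) = W (g *ᵥ v) *ᵥ f := by
  rw [Matrix.mulVec_mulVec, hI, ← Matrix.mulVec_mulVec, even_fixed hT f hf]

lemma pos_zero {g : M4} {T : Matrix X X ℂ} (hI : Inter g T) (hT : T * R = R)
    (v : V) (hv : pos v = 0) : pos (g *ᵥ v) = 0 := by
  have h1 : W v *ᵥ delta 0 = delta 0 := by
    ext x
    rw [W_mulVec, hv, add_zero, zero_dotProduct, sub_zero, delta]
    split_ifs with h
    · simp [h]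
    · simp
  have h2 := W_even hI hT _ delta_zero_even v
  rw [h1, even_fixed hT _ delta_zero_even] at h2
  have h3 := congrFun h2 0
  rw [W_mulVec, zero_add] at h3
  by_contra hne
  simp [delta, hne] at h3

lemma mom_zero {g : M4} {T : Matrix X X ℂ} (hI : Inter g T) (hT : T * R = R)
    (v : V) (hv : mom v = 0) : mom (g *ᵥ v) = 0 := by
  have h1 : W v *ᵥ (fun _ => 1) = fun _ => 1 := by
    ext x
    rw [W_mulVec, hv]
    simp
  have h2 := W_even hI hT (fun _ => 1) (fun _ => rfl) v
  rw [h1, even_fixed hT _ (fun _ => rfl)] at h2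
  have h3 : ∀ x, mom (g *ᵥ v) ⬝ᵥ x - pos (g *ᵥ v) ⬝ᵥ mom (g *ᵥ v) = 0 := by
    intro x
    have h3 := congrFun h2 x
    rw [W_mulVec, mul_one] at h3
    apply ZMod.injective_stdAddChar
    rw [← h3]; simp
  apply dotProduct_eq_zero
  intro x
  have h0 := h3 0
  rw [dotProduct_zero] at h0
  linear_combination h3 x - h0

lemma pos_pm {g : M4} {T : Matrix X X ℂ} (hI : Inter g T) (hT : T * R = R)
    (v : V) (hv : mom v = 0) : pos (g *ᵥ v) = pos v ∨ pos (g *ᵥ v) = - pos v := by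
  have key : ∀ u : V, mom u = 0 → T *ᵥ delta (-pos u) = delta (-pos (g *ᵥ u)) := by
    intro u hu
    rw [← W_delta u hu, W_even hI hT _ delta_zero_even,
      W_delta _ (mom_zero hI hT u hu)]
  have h1 := key v hv
  have hv' : mom (-v) = 0 := by
    have : mom (-v) = - mom v := rfl
    rw [this, hv, neg_zero]
  have h2 := key (-v) hv'
  rw [Matrix.mulVec_neg] at h2
  have e1 : - pos (-v) = pos v := neg_neg (pos v)
  have e2 : - pos (-(g *ᵥ v)) = pos (g *ᵥ v) := neg_neg (pos (g *ᵥ v))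
  rw [e1, e2] at h2
  have h3 := even_fixed hT (delta (pos v) + delta (-pos v)) (by
    intro x
    simp only [Pi.add_apply, delta, neg_eq_iff_eq_neg]
    rw [add_comm, neg_neg])
  rw [Matrix.mulVec_add, h1, h2] at h3
  have h4 := congrFun h3 (pos (g *ᵥ v))
  by_contra! hc
  simp only [Pi.add_apply, delta, if_neg hc.1, if_neg hc.2, if_true] at h4
  split_ifs at h4 <;> norm_num at h4

lemma pm_of_pm : ∀ A : Matrix (Fin 2) (Fin 2) (ZMod 3),
    (∀ a, A *ᵥ a = a ∨ A *ᵥ a = -a) → A = 1 ∨ A = -1 := by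
  have key : ∀ p q r s : ZMod 3, (∀ a b : ZMod 3, (p * a + q * b = a ∧ r * a + s * b = b) ∨
      (p * a + q * b = -a ∧ r * a + s * b = -b)) →
      (p = 1 ∧ q = 0 ∧ r = 0 ∧ s = 1) ∨ (p = -1 ∧ q = 0 ∧ r = 0 ∧ s = -1) := by decide
  intro A hA
  have := key (A 0 0) (A 0 1) (A 1 0) (A 1 1) (by
    intro a b
    rcases hA ![a, b] with h | h
    · left
      have h0 := congrFun h 0
      have h1 := congrFun h 1
      simp [mulVec, dotProduct, Fin.sum_univ_two] at h0 h1
      exact ⟨h0, h1⟩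
    · right
      have h0 := congrFun h 0
      have h1 := congrFun h 1
      simp [mulVec, dotProduct, Fin.sum_univ_two] at h0 h1
      exact ⟨h0, h1⟩)
  rcases this with ⟨h1, h2, h3, h4⟩ | ⟨h1, h2, h3, h4⟩
  · left
    ext i j
    fin_cases i <;> fin_cases j <;> simp [h1, h2, h3, h4]
  · right
    ext i j
    fin_cases i <;> fin_cases j <;> simp [h1, h2, h3, h4]

lemma pm_of_blocks {g : M4} (hg : g ∈ symplecticGroup (Fin 2) (ZMod 3))
    (hB : g.toBlocks₁₂ = 0) (hC : g.toBlocks₂₁ = 0)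
    (hA : g.toBlocks₁₁ = 1 ∨ g.toBlocks₁₁ = -1) : g = 1 ∨ g = -1 := by
  rw [← Matrix.fromBlocks_toBlocks g, SymplecticGroup.fromBlocks_mem_iff] at hg
  rw [← Matrix.fromBlocks_toBlocks g]
  obtain ⟨-, -, h⟩ := hg
  rw [hB, Matrix.mul_zero, sub_zero] at h
  rcases hA with hA | hA
  · left
    rw [hA, Matrix.transpose_one, Matrix.one_mul] at h
    rw [hA, hB, hC, h, Matrix.fromBlocks_one]
  · right
    rw [hA, Matrix.transpose_neg, Matrix.transpose_one, Matrix.neg_mul, Matrix.one_mul] at h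
    rw [hA, hB, hC, neg_eq_iff_eq_neg.1 h, ← Matrix.fromBlocks_one, Matrix.fromBlocks_neg]
    simp

lemma weil_faithful {g : Sp} (h : weil g = 1) : g.1 = 1 ∨ g.1 = -1 := by
  have hn := op_normal g
  have hI := hn.inter
  have hT : op g * R = R := by
    have h' : ev (op g) = 1 := h
    rw [← R_ev hn.comm, h', Matrix.mul_one]
  have hmv : ∀ a b : X, g.1 *ᵥ (Sum.elim a b) = Sum.elim
      (g.1.toBlocks₁₁ *ᵥ a + g.1.toBlocks₁₂ *ᵥ b) (g.1.toBlocks₂₁ *ᵥ a + g.1.toBlocks₂₂ *ᵥ b) := by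
    intro a b
    conv_lhs => rw [← Matrix.fromBlocks_toBlocks g.1]
    rw [Matrix.fromBlocks_mulVec]
    rfl
  have p1 : ∀ a b : X, pos (Sum.elim a b) = a := fun _ _ => rfl
  have p2 : ∀ a b : X, mom (Sum.elim a b) = b := fun _ _ => rfl
  apply pm_of_blocks g.2
  · apply Matrix.mulVec_injective
    ext1 b
    have := pos_zero hI hT (Sum.elim 0 b) rfl
    rw [hmv, p1] at this
    simpa using this
  · apply Matrix.mulVec_injective
    ext1 a
    have := mom_zero hI hT (Sum.elim a 0) rfl
    rw [hmv, p2] at this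
    simpa using this
  · apply pm_of_pm
    intro a
    have := pos_pm hI hT (Sum.elim a 0) rfl
    rw [hmv, p1, p1] at this
    simpa using this

lemma upper_mem (Y : Matrix (Fin 2) (Fin 2) (ZMod 3)) (hY : Yᵀ = Y) :
    fromBlocks 1 Y 0 1 ∈ symplecticGroup (Fin 2) (ZMod 3) := by
  rw [SymplecticGroup.fromBlocks_mem_iff]
  simp [hY]

lemma lower_mem (Y : Matrix (Fin 2) (Fin 2) (ZMod 3)) (hY : Yᵀ = Y) :
    fromBlocks 1 0 Y 1 ∈ symplecticGroup (Fin 2) (ZMod 3) := by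
  rw [SymplecticGroup.fromBlocks_mem_iff]
  simp [hY]

lemma pm_of_central {g : Sp} (hg : g ∈ Subgroup.center Sp) : g.1 = 1 ∨ g.1 = -1 := by
  rw [Subgroup.mem_center_iff] at hg
  have hu : ∀ Y : Matrix (Fin 2) (Fin 2) (ZMod 3), Yᵀ = Y →
      fromBlocks 1 Y 0 1 * g.1 = g.1 * fromBlocks 1 Y 0 1 := fun Y hY =>
    congrArg Subtype.val (hg ⟨_, upper_mem Y hY⟩)
  have hl : ∀ Y : Matrix (Fin 2) (Fin 2) (ZMod 3), Yᵀ = Y →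
      fromBlocks 1 0 Y 1 * g.1 = g.1 * fromBlocks 1 0 Y 1 := fun Y hY =>
    congrArg Subtype.val (hg ⟨_, lower_mem Y hY⟩)
  have hm := g.2
  rw [← Matrix.fromBlocks_toBlocks g.1] at hu hl hm
  simp only [Matrix.fromBlocks_multiply, Matrix.fromBlocks_inj, Matrix.one_mul, Matrix.mul_one,
    Matrix.zero_mul, Matrix.mul_zero, add_zero, zero_add] at hu hl
  have hC : g.1.toBlocks₂₁ = 0 := by
    have := (hu 1 Matrix.transpose_one).1
    simpa using this
  have hB : g.1.toBlocks₁₂ = 0 := by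
    have := (hl 1 Matrix.transpose_one).1
    simpa using this.symm
  have hAD : g.1.toBlocks₂₂ = g.1.toBlocks₁₁ := by
    have := (hu 1 Matrix.transpose_one).2.1
    rw [hB] at this
    simpa using this
  have hcomm : ∀ Y : Matrix (Fin 2) (Fin 2) (ZMod 3), Yᵀ = Y →
      Y * g.1.toBlocks₁₁ = g.1.toBlocks₁₁ * Y := by
    intro Y hY
    have := (hu Y hY).2.1
    rw [hB, hAD] at this
    simpa using this
  apply pm_of_blocks g.2 hB hC
  have h3 := (SymplecticGroup.fromBlocks_mem_iff.1 hm).2.2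
  rw [hB, hAD, Matrix.mul_zero, sub_zero] at h3
  revert h3 hcomm
  generalize g.1.toBlocks₁₁ = A
  intro hcomm h3
  have c1 := hcomm !![1, 0; 0, 0] (by ext i j; fin_cases i <;> fin_cases j <;> rfl)
  have c2 := hcomm !![0, 1; 1, 0] (by ext i j; fin_cases i <;> fin_cases j <;> rfl)
  have d1 := congrFun (congrFun c1 0) 1
  have d2 := congrFun (congrFun c1 1) 0
  have d3 := congrFun (congrFun c2 0) 1
  have d4 := congrFun (congrFun h3 0) 0
  simp [Matrix.mul_apply, Fin.sum_univ_two] at d1 d2 d3 d4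
  rw [← d2] at d4
  have key : ∀ t : ZMod 3, t * t + 0 * 0 = 1 → t = 1 ∨ t = -1 := by decide
  rcases key _ d4 with h | h
  · left
    ext i j
    fin_cases i <;> fin_cases j <;> simp [h, d1, d3, ← d2]
  · right
    ext i j
    fin_cases i <;> fin_cases j <;> simp [h, d1, d3, ← d2]

lemma central_of_pm {g : Sp} (h : g.1 = 1 ∨ g.1 = -1) : g ∈ Subgroup.center Sp := by
  rw [Subgroup.mem_center_iff]
  intro k
  apply Subtype.ext
  change k.1 * g.1 = g.1 * k.1
  rcases h with h | h <;> rw [h] <;> simp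

noncomputable def weilQuot : Sp ⧸ Subgroup.center Sp →* Matrix (Fin 5) (Fin 5) ℂ :=
  QuotientGroup.lift (Subgroup.center Sp) weil
    (fun _ hg => weil_one_of (pm_of_central hg))

lemma weilQuot_injective : Function.Injective weilQuot := by
  rw [injective_iff_map_eq_one]
  intro q
  induction q using QuotientGroup.induction_on with
  | H g =>
    intro h
    rw [QuotientGroup.eq_one_iff]
    exact central_of_pm (weil_faithful h)

end WeilRep

/-- PSp(4, F_3) admits a faithful complex linear representation of dimension 5. -/
theorem psp4_f3_faithful_rep_dim5 :
    ∃ ρ : Representation ℂ (Matrix.symplecticGroup (Fin 2) (ZMod 3) ⧸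
        Subgroup.center (Matrix.symplecticGroup (Fin 2) (ZMod 3))) (Fin 5 → ℂ),
      Function.Injective ρ :=
  ⟨((Matrix.toLinAlgEquiv' : Matrix (Fin 5) (Fin 5) ℂ ≃ₐ[ℂ] _) :
      Matrix (Fin 5) (Fin 5) ℂ →* ((Fin 5 → ℂ) →ₗ[ℂ] (Fin 5 → ℂ))).comp WeilRep.weilQuot,
    (Matrix.toLinAlgEquiv' : Matrix (Fin 5) (Fin 5) ℂ ≃ₐ[ℂ] _).injective.comp
      WeilRep.weilQuot_injective⟩
end

section
/- The group SL(2, F_8) admits a faithful complex linear representation of dimension 7. -/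
/-- A concrete model of the field with eight elements: bit vectors, `α ^ 3 = α + 1`. -/
def K8 : Type := Fin 8

namespace K8

instance : DecidableEq K8 := inferInstanceAs (DecidableEq (Fin 8))
instance : Fintype K8 := inferInstanceAs (Fintype (Fin 8))

/-- Element with given bits. -/
def mk (n : ℕ) : K8 := ⟨n % 8, Nat.mod_lt _ (by norm_num)⟩
/-- Bits of an element. -/
def bits (a : K8) : ℕ := Fin.val a
/-- Addition is bitwise xor. -/
def add (a b : K8) : K8 := mk (a.bits ^^^ b.bits)
/-- Multiplication, from a packed table. -/
def mul (a b : K8) : K8 := mk (2821848294356612419217921029917578219971947684264937521152 >>> (3 * (8 * a.bits + b.bits)))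
/-- Inversion, from a packed table. -/
def inv (a : K8) : K8 := mk (9272648 >>> (3 * a.bits))

set_option maxRecDepth 100000

theorem add_assoc' : ∀ a b c : K8, add (add a b) c = add a (add b c) := by decide +kernel
theorem add_comm' : ∀ a b : K8, add a b = add b a := by decide +kernel
theorem zero_add' : ∀ a : K8, add (mk 0) a = a := by decide +kernel
theorem add_self' : ∀ a : K8, add a a = mk 0 := by decide +kernel
theorem mul_assoc' : ∀ a b c : K8, mul (mul a b) c = mul a (mul b c) := by decide +kernel
theorem mul_comm' : ∀ a b : K8, mul a b = mul b a := by decide +kernel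
theorem one_mul' : ∀ a : K8, mul (mk 1) a = a := by decide +kernel
theorem mul_add' : ∀ a b c : K8, mul a (add b c) = add (mul a b) (mul a c) := by decide +kernel
theorem zero_mul' : ∀ a : K8, mul (mk 0) a = mk 0 := by decide +kernel
theorem mul_inv' : ∀ a : K8, a ≠ mk 0 → mul a (inv a) = mk 1 := by decide +kernel

instance : Zero K8 := ⟨mk 0⟩
instance : One K8 := ⟨mk 1⟩
instance : Add K8 := ⟨add⟩
instance : Mul K8 := ⟨mul⟩
instance : Neg K8 := ⟨id⟩
instance : Inv K8 := ⟨inv⟩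

instance : Field K8 where
  add_assoc := add_assoc'
  zero_add := zero_add'
  add_zero a := (add_comm' _ _).trans (zero_add' a)
  add_comm := add_comm'
  nsmul := nsmulRec
  zsmul := zsmulRec
  neg_add_cancel := add_self'
  mul_assoc := mul_assoc'
  mul_comm := mul_comm'
  one_mul := one_mul'
  mul_one a := (mul_comm' _ _).trans (one_mul' a)
  left_distrib := mul_add'
  right_distrib a b c := by
    change mul (add a b) c = add (mul a c) (mul b c)
    rw [mul_comm', mul_add', mul_comm' c a, mul_comm' c b]
  zero_mul := zero_mul'
  mul_zero a := (mul_comm' _ _).trans (zero_mul' a)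
  exists_pair_ne := ⟨mk 0, mk 1, by decide⟩
  mul_inv_cancel := mul_inv'
  inv_zero := by decide +kernel
  nnqsmul := _
  nnqsmul_def := fun _ _ => rfl
  qsmul := _
  qsmul_def := fun _ _ => rfl

theorem two_eq_zero : (2 : K8) = 0 := by
  rw [← one_add_one_eq_two]
  exact add_self' (mk 1)

theorem card : Fintype.card K8 = 8 := by decide +kernel

/-- The nontrivial additive character `(-1) ^ Tr x`. -/
def psi (x : K8) : ℤ := if x.bits % 2 = 1 then -1 else 1

/-- Twice the Bessel function of the cuspidal representation. -/
def J (x : K8) : ℤ :=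
  if x.bits = 1 then 1 else if x.bits = 2 ∨ x.bits = 4 ∨ x.bits = 6 then -1 else 0

/-- The nonzero elements. -/
def emb (i : Fin 7) : K8 := mk (i.val + 1)

theorem psi_add (x y : K8) : psi (x + y) = psi x * psi y := by
  have h : ∀ x y : K8, psi (add x y) = psi x * psi y := by decide +kernel
  exact h x y

theorem psi_zero : psi 0 = 1 := by decide +kernel

theorem psi_sq (x : K8) : psi x * psi x = 1 := by
  have h : ∀ x : K8, psi x * psi x = 1 := by decide +kernel
  exact h x

theorem emb_inj : Function.Injective emb := by
  have h : ∀ i j : Fin 7, emb i = emb j → i = j := by decide +kernel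
  exact fun i j => h i j

theorem emb_ne (i : Fin 7) : emb i ≠ 0 := by
  have h : ∀ i : Fin 7, emb i ≠ mk 0 := by decide +kernel
  exact h i

theorem emb_surj (x : K8) (hx : x ≠ 0) : ∃ i, emb i = x := by
  have h : ∀ x : K8, x ≠ mk 0 → ∃ i, emb i = x := by decide +kernel
  exact h x hx

theorem key_zero (x z : K8) (hx : x ≠ 0) (hz : z ≠ 0) :
    ∑ i, J (x * emb i) * J (emb i * z) = if x = z then 4 else 0 := by
  have h : ∀ x z : K8, x ≠ mk 0 → z ≠ mk 0 →
      ∑ i, J (mul x (emb i)) * J (mul (emb i) z) = if x = z then 4 else 0 := by decide +kernel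
  exact h x z hx hz

theorem key (e x z : K8) (he : e ≠ 0) (hx : x ≠ 0) (hz : z ≠ 0) :
    ∑ i, psi (e * emb i) * (J (x * emb i) * J (emb i * z)) =
      2 * (psi ((x + z) * e⁻¹) * J (x * z * (e⁻¹ * e⁻¹))) := by
  have h : ∀ e x z : K8, e ≠ mk 0 → x ≠ mk 0 → z ≠ mk 0 →
      ∑ i, psi (mul e (emb i)) * (J (mul x (emb i)) * J (mul (emb i) z)) =
      2 * (psi (mul (add x z) (inv e)) * J (mul (mul x z) (mul (inv e) (inv e)))) := by
    decide +kernel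
  exact h e x z he hx hz

/-- Twice the kernel of the operator of `!![a, b; c, d]`. -/
def kern (a b c d x y : K8) : ℤ :=
  if c = 0 then (if y = a * a * x then 2 * psi (a * b * x) else 0)
  else psi ((a * x + d * y) / c) * J (x * y / (c * c))

theorem sum_delta (f : K8 → ℤ) (k : K8) (hk : k ≠ 0) :
    ∑ i, (if emb i = k then f (emb i) else 0) = f k := by
  obtain ⟨j, rfl⟩ := emb_surj k hk
  simp [emb_inj.eq_iff]

theorem kern_upper (a b c d p q r x y : K8) (hdet : a * d - b * c = 1) (hpr : p * r = 1)
    (hx : x ≠ 0) (hy : y ≠ 0) :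
    ∑ i, kern a b c d x (emb i) * kern p q 0 r (emb i) y =
      2 * kern (a * p) (a * q + b * r) (c * p) (c * q + d * r) x y := by
  have hp : p ≠ 0 := left_ne_zero_of_mul_eq_one hpr
  have hr : r = p⁻¹ := eq_inv_of_mul_eq_one_right hpr
  subst hr
  have h1 : ∀ i, kern a b c d x (emb i) * kern p q 0 p⁻¹ (emb i) y =
      if emb i = y / (p * p) then kern a b c d x (emb i) * (2 * psi (p * q * emb i)) else 0 := by
    intro i
    have : y = p * p * emb i ↔ emb i = y / (p * p) := by
      rw [eq_div_iff (mul_ne_zero hp hp), eq_comm, mul_comm]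
    simp [kern, this]
  rw [Finset.sum_congr rfl fun i _ => h1 i,
    sum_delta (fun z => kern a b c d x z * (2 * psi (p * q * z))) _
      (div_ne_zero hy (mul_ne_zero hp hp))]
  by_cases hc : c = 0
  · subst hc
    have h2 : y / (p * p) = a * a * x ↔ y = a * p * (a * p) * x := by
      rw [div_eq_iff (mul_ne_zero hp hp)]
      constructor <;> intro h <;> rw [h] <;> ring
    simp only [kern, if_true, zero_mul, h2]
    split_ifs with h
    · have : a * p * (a * q + b * p⁻¹) * x = a * b * x + p * q * (y / (p * p)) := by
        rw [h]; field_simp; ring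
      rw [this, psi_add]; ring
    · simp
  · have hcp : c * p ≠ 0 := mul_ne_zero hc hp
    simp only [kern, hc, hcp, if_false]
    have e1 : (a * p * x + (c * q + d * p⁻¹) * y) / (c * p) =
        (a * x + d * (y / (p * p))) / c + p * q * (y / (p * p)) := by
      field_simp; ring
    have e2 : x * y / (c * p * (c * p)) = x * (y / (p * p)) / (c * c) := by
      field_simp
    rw [e1, e2, psi_add]; ring

theorem kern_w (a b c d x y : K8) (hdet : a * d - b * c = 1) (hx : x ≠ 0) (hy : y ≠ 0) :
    ∑ i, kern a b c d x (emb i) * kern 0 1 1 0 (emb i) y = 2 * kern b a d c x y := by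
  have h0 : ∀ z, kern 0 1 1 0 z y = J (z * y) := by
    intro z; simp [kern, psi_zero]
  simp only [h0]
  by_cases hc : c = 0
  · subst hc
    have had : a * d = 1 := by simpa using hdet
    have ha : a ≠ 0 := left_ne_zero_of_mul_eq_one had
    have hd : d = a⁻¹ := eq_inv_of_mul_eq_one_right had
    subst hd
    have h1 : ∀ i, kern a b 0 a⁻¹ x (emb i) * J (emb i * y) =
        if emb i = a * a * x then 2 * psi (a * b * x) * J (emb i * y) else 0 := by
      intro i; simp [kern]
    rw [Finset.sum_congr rfl fun i _ => h1 i,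
      sum_delta (fun z => 2 * psi (a * b * x) * J (z * y)) _
        (mul_ne_zero (mul_ne_zero ha ha) hx)]
    simp only [kern, inv_eq_zero, ha, if_false]
    have e1 : (b * x + 0 * y) / a⁻¹ = a * b * x := by field_simp; ring
    have e2 : x * y / (a⁻¹ * a⁻¹) = a * a * x * y := by field_simp
    rw [e1, e2]; ring
  · have hcc : c * c ≠ 0 := mul_ne_zero hc hc
    have h1 : ∀ i, kern a b c d x (emb i) * J (emb i * y) =
        psi (a * x / c) * (psi (d / c * emb i) *
          (J (x / (c * c) * emb i) * J (emb i * y))) := by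
      intro i
      simp only [kern, hc, if_false]
      have e1 : (a * x + d * emb i) / c = a * x / c + d / c * emb i := by field_simp
      have e2 : x * emb i / (c * c) = x / (c * c) * emb i := by field_simp
      rw [e1, e2, psi_add]; ring
    rw [Finset.sum_congr rfl fun i _ => h1 i, ← Finset.mul_sum]
    by_cases hd : d = 0
    · subst hd
      have hbc : b * c = 1 := by
        linear_combination -hdet + (-1 : K8) * two_eq_zero
      have hb : b = c⁻¹ := eq_inv_of_mul_eq_one_left hbc
      subst hb
      simp only [zero_div, zero_mul, psi_zero, one_mul]
      rw [key_zero _ _ (div_ne_zero hx hcc) hy]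
      have e1 : c⁻¹ * a * x = a * x / c := by field_simp
      have e2 : c⁻¹ * c⁻¹ * x = x / (c * c) := by field_simp
      simp only [kern, if_true, e1, e2, eq_comm (a := y)]
      split_ifs <;> ring
    · rw [key _ _ _ (div_ne_zero hd hc) (div_ne_zero hx hcc) hy]
      simp only [kern, hd, if_false]
      have e1 : (b * x + c * y) / d = a * x / c + (x / (c * c) + y) * (d / c)⁻¹ := by
        field_simp
        linear_combination (-x) * hdet + (- x) * two_eq_zero
      have e2 : x * y / (d * d) = x / (c * c) * y * ((d / c)⁻¹ * (d / c)⁻¹) := by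
        field_simp
      rw [e1, e2, psi_add]; ring

/-- The group. -/
abbrev G := Matrix.SpecialLinearGroup (Fin 2) K8

/-- Twice the representing matrix. -/
def R (g : G) : Matrix (Fin 7) (Fin 7) ℤ :=
  Matrix.of fun i j => kern (g 0 0) (g 0 1) (g 1 0) (g 1 1) (emb i) (emb j)

theorem det_eq (g : G) : g 0 0 * g 1 1 - g 0 1 * g 1 0 = 1 := by
  have := g.det_coe
  rwa [Matrix.det_fin_two] at this

theorem R_upper (g h : G) (hh : h 1 0 = 0) : R g * R h = (2 : ℤ) • R (g * h) := by
  ext i j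
  have hd := det_eq h
  have := kern_upper _ _ _ _ (h 0 0) (h 0 1) (h 1 1) (emb i) (emb j) (det_eq g)
    (by simpa [hh] using hd) (emb_ne i) (emb_ne j)
  simpa [R, Matrix.mul_apply, Fin.sum_univ_two, hh] using this

/-- The Weyl element. -/
def w : G := ⟨!![0, 1; 1, 0], by
  rw [Matrix.det_fin_two_of]; linear_combination (-1 : K8) * two_eq_zero⟩

theorem R_w (g : G) : R g * R w = (2 : ℤ) • R (g * w) := by
  ext i j
  have := kern_w _ _ _ _ (emb i) (emb j) (det_eq g) (emb_ne i) (emb_ne j)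
  have hw : (w : Matrix (Fin 2) (Fin 2) K8) = !![0, 1; 1, 0] := rfl
  simpa [R, hw, Matrix.mul_apply, Fin.sum_univ_two] using this

theorem R_closed (h k : G) (hh : ∀ g, R g * R h = (2 : ℤ) • R (g * h))
    (hk : ∀ g, R g * R k = (2 : ℤ) • R (g * k)) (g : G) :
    R g * R (h * k) = (2 : ℤ) • R (g * (h * k)) := by
  have h1 : (2 : ℤ) • (R g * R (h * k)) = (2 : ℤ) • ((2 : ℤ) • R (g * (h * k))) := by
    rw [← Matrix.mul_smul, ← hk h, ← Matrix.mul_assoc, hh g, Matrix.smul_mul, hk, mul_assoc]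
  exact smul_right_injective _ (two_ne_zero) h1

theorem R_mul (g h : G) : R g * R h = (2 : ℤ) • R (g * h) := by
  by_cases hc : h 1 0 = 0
  · exact R_upper g h hc
  · have hd := det_eq h
    let u : G := ⟨!![1, h 0 0 / h 1 0; 0, 1], by simp⟩
    let v : G := ⟨!![h 1 0, h 1 1; 0, (h 1 0)⁻¹], by simp [hc]⟩
    have e : h = u * w * v := by
      have hw : (w : Matrix (Fin 2) (Fin 2) K8) = !![0, 1; 1, 0] := rfl
      have hu : (u : Matrix (Fin 2) (Fin 2) K8) = !![1, h 0 0 / h 1 0; 0, 1] := rfl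
      have hv : (v : Matrix (Fin 2) (Fin 2) K8) = !![h 1 0, h 1 1; 0, (h 1 0)⁻¹] := rfl
      clear_value u v
      ext i j
      fin_cases i <;> fin_cases j <;>
        simp [hu, hv, hw, Matrix.mul_apply, Fin.sum_univ_two]
      · field_simp
      · field_simp
        linear_combination -hd + (-1 : K8) * two_eq_zero
    rw [e]
    exact R_closed _ _ (R_closed _ _ (fun g => R_upper g u (by simp [u])) R_w)
      (fun g => R_upper g v (by simp [v])) g

theorem R_one : R 1 = (2 : ℤ) • 1 := by
  ext i j
  simp [R, kern, Matrix.one_apply, emb_inj.eq_iff, psi_zero, eq_comm (a := j)]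

theorem J_lt (x : K8) : J x < 2 ∧ -2 < J x := by
  have h : ∀ x : K8, J x < 2 ∧ -2 < J x := by decide +kernel
  exact h x

theorem psi_cases (x : K8) : psi x = 1 ∨ psi x = -1 := by
  unfold psi; split_ifs <;> simp

theorem psi_triv (b : K8) (h : ∀ x, psi (b * x) = 1) : b = 0 := by
  have H : ∀ b : K8, (∀ x, psi (mul b x) = 1) → b = mk 0 := by decide +kernel
  exact H b h

theorem sq_one (a : K8) (h : a * a = 1) : a = 1 := by
  have H : ∀ a : K8, mul a a = mk 1 → a = mk 1 := by decide +kernel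
  exact H a h

theorem R_inj (g : G) (h : R g = (2 : ℤ) • 1) : g = 1 := by
  have hk : ∀ x : K8, x ≠ 0 → kern (g 0 0) (g 0 1) (g 1 0) (g 1 1) x x = 2 := by
    intro x hx
    obtain ⟨i, rfl⟩ := emb_surj x hx
    have := congrFun (congrFun h i) i
    simpa [R] using this
  have hd := det_eq g
  by_cases hc : g 1 0 = 0
  · simp only [kern, hc, if_true] at hk
    have ha : g 0 0 = 1 := by
      have h1 := hk 1 one_ne_zero
      apply sq_one
      split_ifs at h1 with h2
      · simpa using h2.symm
      · simp at h1
    have hb : g 0 1 = 0 := by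
      apply psi_triv
      intro x
      by_cases hx : x = 0
      · simp [hx, psi_zero]
      · have := hk x hx
        simp [ha] at this
        exact this
    have hdd : g 1 1 = 1 := by simpa [ha, hc] using hd
    ext i j
    fin_cases i <;> fin_cases j <;> simp [ha, hb, hc, hdd]
  · exfalso
    have h1 := hk 1 one_ne_zero
    simp only [kern, hc, if_false] at h1
    have h2 := J_lt (1 * 1 / (g 1 0 * g 1 0))
    rcases psi_cases ((g 0 0 * 1 + g 1 1 * 1) / g 1 0) with h3 | h3 <;> rw [h3] at h1 <;> lia

/-- The matrix representation. -/
noncomputable def rho : G →* Matrix (Fin 7) (Fin 7) ℂ where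
  toFun g := (2⁻¹ : ℂ) • (R g).map (Int.castRingHom ℂ)
  map_one' := by
    rw [R_one]
    ext i j
    simp only [Matrix.smul_apply, Matrix.map_apply, Matrix.one_apply]
    split_ifs <;> simp
  map_mul' g h := by
    have h1 : (R g).map (Int.castRingHom ℂ) * (R h).map (Int.castRingHom ℂ) =
        (2 : ℂ) • (R (g * h)).map (Int.castRingHom ℂ) := by
      rw [← Matrix.map_mul, R_mul]
      ext i j
      simp [-zsmul_eq_mul]
    rw [Matrix.smul_mul, Matrix.mul_smul, h1, smul_smul, smul_smul]
    congr 1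
    norm_num

theorem rho_inj : Function.Injective rho := by
  rw [injective_iff_map_eq_one]
  intro g hg
  apply R_inj
  ext i j
  have h1 : (2⁻¹ : ℂ) * ((R g i j : ℤ) : ℂ) = (1 : Matrix (Fin 7) (Fin 7) ℂ) i j := by
    have := congrFun (congrFun hg i) j
    simpa [rho] using this
  have h2 : ((R g i j : ℤ) : ℂ) = 2 * (1 : Matrix (Fin 7) (Fin 7) ℂ) i j := by
    rw [← h1]; ring
  by_cases hij : i = j
  · subst hij
    simp only [Matrix.one_apply_eq, mul_one] at h2
    simp only [Matrix.smul_apply, Matrix.one_apply_eq]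
    exact_mod_cast h2
  · simp only [Matrix.one_apply_ne hij, mul_zero] at h2
    simp only [Matrix.smul_apply, Matrix.one_apply_ne hij]
    simpa using h2

theorem exists_equiv : Nonempty (GaloisField 2 3 ≃+* K8) := by
  have : Fintype (GaloisField 2 3) := Fintype.ofFinite _
  refine ⟨FiniteField.ringEquivOfCardEq ?_⟩
  rw [card, ← Nat.card_eq_fintype_card, GaloisField.card 2 3 (by norm_num)]
  norm_num

end K8

/-- SL(2, F_8) admits a faithful complex linear representation of dimension 7. -/
theorem sl2_f8_faithful_rep_dim7 :
    ∃ ρ : Representation ℂ (Matrix.SpecialLinearGroup (Fin 2) (GaloisField 2 3))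
        (Fin 7 → ℂ),
      Function.Injective ρ := by
  obtain ⟨e⟩ := K8.exists_equiv
  let f : Matrix.SpecialLinearGroup (Fin 2) (GaloisField 2 3) →* K8.G :=
    Matrix.SpecialLinearGroup.map (e : GaloisField 2 3 →+* K8)
  have hf : Function.Injective f := by
    intro g h hgh
    ext i j
    have := congrArg (fun k : K8.G => k i j) hgh
    simpa [f] using this
  let t : Matrix (Fin 7) (Fin 7) ℂ →* ((Fin 7 → ℂ) →ₗ[ℂ] (Fin 7 → ℂ)) :=
    (Matrix.toLinAlgEquiv' : Matrix (Fin 7) (Fin 7) ℂ ≃ₐ[ℂ] _).toAlgHom.toRingHom.toMonoidHom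
  have ht : Function.Injective t :=
    (Matrix.toLinAlgEquiv' : Matrix (Fin 7) (Fin 7) ℂ ≃ₐ[ℂ] _).injective
  refine ⟨t.comp (K8.rho.comp f), ?_⟩
  exact ht.comp (K8.rho_inj.comp hf)
end
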